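/- arXiv:1208.1783 — 3 statements merged into one kernel-verified Lean document; each statement's English description precedes it below -/
import Mathlib

section
/- Let F be a weighted constraint language over a finite domain D with Fun₁(D, [0,1]∩ℚ) ⊆ F ⊆ Fun(D, [0,1]∩ℚ) (i.e., F contains all unary functions D → [0,1]∩ℚ and all its weight functions take values in [0,1]∩ℚ). If F is weakly log-supermodular, then the valued constraint language ν(F) has an STP/MJN multimorphism. -/
open scoped NNRat ENNReal

/-- A cost function of some arity over domain `D`, taking values in `ℝ≥0 ∪ {∞}`. -/
abbrev CFun (D : Type) : Type := Σ k : ℕ, (Fin k → D) → ℝ≥0∞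

/-- The binary crisp equality cost function. -/
noncomputable def eqC (D : Type) [DecidableEq D] : (Fin 2 → D) → ℝ≥0∞ :=
  fun x => if x 0 = x 1 then 0 else ⊤

/-- `f` is definable by a psm-formula over `Φ ∪ {eq}`: a minimisation over `k`
bound variables of a sum of `m` atomic formulas. -/
def InVClone {D : Type} [Fintype D] [DecidableEq D] (Φ : Set (CFun D)) {n : ℕ}
    (f : (Fin n → D) → ℝ≥0∞) : Prop :=
  ∃ (k m : ℕ) (ar : Fin m → ℕ) (g : ∀ j : Fin m, (Fin (ar j) → D) → ℝ≥0∞)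
    (sc : ∀ j : Fin m, Fin (ar j) → Fin (n + k)),
    (∀ j : Fin m, (⟨ar j, g j⟩ : CFun D) ∈ Φ ∨ (⟨ar j, g j⟩ : CFun D) = ⟨2, eqC D⟩) ∧
    ∀ x : Fin n → D, f x = ⨅ y : Fin k → D, ∑ j : Fin m, g j (fun i => Fin.append x y (sc j i))

/-- Weak submodularity of a valued constraint language. -/
def WeaklySubmodular {D : Type} [Fintype D] [DecidableEq D] (Φ : Set (CFun D)) : Prop :=
  ∀ f : (Fin 2 → D) → ℝ≥0∞, InVClone Φ f → ∀ a b : D,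
    f ![a, a] + f ![b, b] ≤ f ![a, b] + f ![b, a] ∨ (f ![a, a] = ⊤ ∧ f ![b, b] = ⊤)

/-- A weight function of some arity over domain `D`, taking values in `ℚ≥0`. -/
abbrev WFun (D : Type) : Type := Σ k : ℕ, (Fin k → D) → ℚ≥0

/-- The binary equality weight function. -/
def EQw (D : Type) [DecidableEq D] : (Fin 2 → D) → ℚ≥0 :=
  fun x => if x 0 = x 1 then 1 else 0

/-- `F` is definable by a pps-formula over `𝓕 ∪ {EQ}`: a sum over `k` bound
variables of a product of `m` atomic formulas. -/
def InFClone {D : Type} [Fintype D] [DecidableEq D] (𝓕 : Set (WFun D)) {n : ℕ}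
    (F : (Fin n → D) → ℚ≥0) : Prop :=
  ∃ (k m : ℕ) (ar : Fin m → ℕ) (G : ∀ j : Fin m, (Fin (ar j) → D) → ℚ≥0)
    (sc : ∀ j : Fin m, Fin (ar j) → Fin (n + k)),
    (∀ j : Fin m, (⟨ar j, G j⟩ : WFun D) ∈ 𝓕 ∨ (⟨ar j, G j⟩ : WFun D) = ⟨2, EQw D⟩) ∧
    ∀ x : Fin n → D, F x = ∑ y : Fin k → D, ∏ j : Fin m, G j (fun i => Fin.append x y (sc j i))

/-- Weak log-supermodularity of a weighted constraint language. -/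
def WeaklyLogSupermodular {D : Type} [Fintype D] [DecidableEq D] (𝓕 : Set (WFun D)) : Prop :=
  ∀ F : (Fin 2 → D) → ℚ≥0, InFClone 𝓕 F → ∀ a b : D,
    F ![a, b] * F ![b, a] ≤ F ![a, a] * F ![b, b] ∨ (F ![a, a] = 0 ∧ F ![b, b] = 0)

/-- The cost function `ν(F)` associated with a `[0,1]`-valued weight function `F`:
`ν(F)(x) = -ln F(x)` if `F(x) > 0`, and `∞` if `F(x) = 0`. -/
noncomputable def nuF {D : Type} {k : ℕ} (F : (Fin k → D) → ℚ≥0) : (Fin k → D) → ℝ≥0∞ :=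
  fun x => if F x = 0 then ⊤ else ENNReal.ofReal (-Real.log ((F x : ℚ) : ℝ))

/-- The valued constraint language `ν(𝓕)`. -/
def nuSet {D : Type} (𝓕 : Set (WFun D)) : Set (CFun D) :=
  {g | ∃ F ∈ 𝓕, g = ⟨F.1, nuF F.2⟩}


/-- A `k`-tuple of `k`-ary operations is conservative if it preserves the
multiset of arguments. -/
def ConservativeTuple {D : Type} [Fintype D] {k : ℕ} (ρ : Fin k → (Fin k → D) → D) : Prop :=
  ∀ x : Fin k → D,
    (Finset.univ.val.map x : Multiset D) = Finset.univ.val.map (fun i => ρ i x)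

/-- A `k`-tuple of `k`-ary operations is a multimorphism of an arity-`r` cost
function `f`. -/
def IsMultimorphism {D : Type} {k r : ℕ} (ρ : Fin k → (Fin k → D) → D)
    (f : (Fin r → D) → ℝ≥0∞) : Prop :=
  ∀ x : Fin k → (Fin r → D),
    ∑ i : Fin k, f (fun j => ρ i (fun s => x s j)) ≤ ∑ i : Fin k, f (x i)

/-- The pair `⟨⊓, ⊔⟩` viewed as a 2-tuple of binary operations. -/
def pairTuple {D : Type} (inf sup : D → D → D) : Fin 2 → (Fin 2 → D) → D :=
  fun i x => if i = 0 then inf (x 0) (x 1) else sup (x 0) (x 1)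

/-- The triple `⟨Mj1, Mj2, Mn3⟩` viewed as a 3-tuple of ternary operations. -/
def tripleTuple {D : Type} (m1 m2 m3 : D → D → D → D) : Fin 3 → (Fin 3 → D) → D :=
  fun i x =>
    if i = 0 then m1 (x 0) (x 1) (x 2)
    else if i = 1 then m2 (x 0) (x 1) (x 2)
    else m3 (x 0) (x 1) (x 2)

/-- A valued constraint language `Φ` has an STP/MJN multimorphism: there are a
symmetric `M ⊆ D²`, a conservative pair `⟨⊓, ⊔⟩` that is an STP on `M`, and a
conservative triple `⟨Mj1, Mj2, Mn3⟩` that is an MJN on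
`{(a,b) ∈ D² \ M : a ≠ b}`, with both tuples multimorphisms of every `f ∈ Φ`. -/
def HasSTPMJN {D : Type} [Fintype D] (Φ : Set (CFun D)) : Prop :=
  ∃ (inf sup : D → D → D) (m1 m2 m3 : D → D → D → D) (M : Set (D × D)),
    (∀ a b : D, (a, b) ∈ M → (b, a) ∈ M) ∧
    ConservativeTuple (pairTuple inf sup) ∧
    ConservativeTuple (tripleTuple m1 m2 m3) ∧
    (∀ g ∈ Φ, IsMultimorphism (pairTuple inf sup) g.2) ∧
    (∀ g ∈ Φ, IsMultimorphism (tripleTuple m1 m2 m3) g.2) ∧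
    (∀ a b : D, (a, b) ∈ M → inf a b = inf b a ∧ sup a b = sup b a) ∧
    (∀ a b c x y : D, ({a, b, c} : Multiset D) = {x, x, y} → x ≠ y → (x, y) ∉ M →
      m1 a b c = x ∧ m2 a b c = x ∧ m3 a b c = y)


set_option linter.unusedSectionVars false

namespace STPMJN

open Finset

/-! ### Combinatorial lemma on mixed boxes -/

lemma arith8 {a000 a001 a010 a011 a100 a101 a110 a111 : ℚ≥0}
    (c1 : a001 * a010 ≤ a000 * a011) (c2 : a011 * a110 ≤ a010 * a111)
    (c3 : a001 * a100 ≤ a000 * a101) (c4 : a101 * a110 ≤ a100 * a111)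
    (c5 : max a001 a101 * max a010 a110 ≤ max a000 a100 * max a011 a111) :
    a001 * a110 ≤ a000 * a111 := by
  have key : ∀ p q : ℚ≥0, a001 * p ≤ a000 * q → q * a110 ≤ p * a111 → p ≠ 0 → q ≠ 0 →
      a001 * a110 ≤ a000 * a111 := by
    intro p q h1 h2 hp hq
    have h3 := mul_le_mul' h1 h2
    have hpq : 0 < p * q := pos_iff_ne_zero.mpr (mul_ne_zero hp hq)
    refine le_of_mul_le_mul_right ?_ hpq
    calc a001 * a110 * (p * q) = a001 * p * (q * a110) := by ring
      _ ≤ _ := h3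
      _ = _ := by ring
  by_cases h1 : a001 = 0
  · simp [h1]
  by_cases h6 : a110 = 0
  · simp [h6]
  have aux : ∀ p q : ℚ≥0, a001 * p ≤ a000 * q → q * a110 ≤ p * a111 →
      a001 * a110 ≤ a000 * a111 ∨ (p = 0 ∧ q = 0) := by
    intro p q hp hq
    by_cases p0 : p = 0
    · right
      refine ⟨p0, ?_⟩
      rw [p0] at hq
      simp at hq
      tauto
    · by_cases q0 : q = 0
      · rw [q0] at hp
        simp at hp
        tauto
      · exact Or.inl (key p q hp hq p0 q0)
  rcases aux _ _ c1 c2 with h | ⟨h2, h3⟩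
  · exact h
  rcases aux _ _ c3 c4 with h | ⟨h4, h5⟩
  · exact h
  simpa [h2, h3, h4, h5] using c5

/-- The tuple of states that is `u` on `K`, `v` on `S` and `B` elsewhere. -/
def mix {ι T : Type} [DecidableEq ι] (B : ι → T) (K S : Finset ι) (u v : ι → T) : ι → T :=
  fun l => if l ∈ K then u l else if l ∈ S then v l else B l

lemma mix_lemma {ι T : Type} [DecidableEq ι] (F : (ι → T) → ℚ≥0) (x y m : ι → T)
    (hm : ∀ B i, F (Function.update B i (m i)) =
      max (F (Function.update B i (x i))) (F (Function.update B i (y i)))) :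
    ∀ (N : ℕ) (K S : Finset ι) (B : ι → T), K.card + S.card = N → Disjoint K S →
    (∀ k ∈ K, ∀ i ∈ S, ∀ B : ι → T,
      F (mix B {k} {i} x x) * F (mix B {k} {i} y y) ≤
      F (mix B {k} {i} x y) * F (mix B {k} {i} y x)) →
    F (mix B K S x x) * F (mix B K S y y) ≤ F (mix B K S x y) * F (mix B K S y x) := by
  intro N
  induction N using Nat.strong_induction_on with
  | _ N ih =>
  have main : ∀ (K S : Finset ι) (B : ι → T), K.card + S.card = N → Disjoint K S →
    (∀ k ∈ K, ∀ i ∈ S, ∀ B : ι → T,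
      F (mix B {k} {i} x x) * F (mix B {k} {i} y y) ≤
      F (mix B {k} {i} x y) * F (mix B {k} {i} y x)) → 2 ≤ K.card → S.Nonempty → 
    F (mix B K S x x) * F (mix B K S y y) ≤ F (mix B K S x y) * F (mix B K S y x) := by
    intro K S B hN hd hp hK hS
    obtain ⟨i, hi⟩ : K.Nonempty := card_pos.mp (by omega)
    have hc : (K.erase i).card = K.card - 1 := card_erase_of_mem hi
    have hiS : i ∉ S := fun h => (disjoint_left.mp hd hi) h
    set K' := K.erase i with hK'
    have hKK : K = insert i K' := (insert_erase hi).symm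
    have hd' : Disjoint K' S := disjoint_of_subset_left (erase_subset _ _) hd
    have hid : Disjoint {i} S := by simpa using hiS
    have hiK' : i ∉ K' := by simp [hK']
    have e1 : ∀ u v w : ι → T, mix (mix B {i} ∅ u u) K' S v w =
        mix (mix B K' ∅ v v) {i} S u w := by
      intro u v w
      funext l
      simp only [mix]
      by_cases h1 : l = i
      · subst h1; simp [hiK', hiS]
      · by_cases h2 : l ∈ K' <;> by_cases h3 : l ∈ S <;> simp [h1, h2, h3]
        exact absurd h3 (disjoint_left.mp hd' h2)
    have e2 : ∀ u w : ι → T, mix B K S u w = mix (mix B {i} ∅ u u) K' S u w := by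
      intro u w
      funext l
      simp only [mix]
      by_cases h1 : l = i
      · subst h1; simp [hi, hiK', hiS]
      · have : l ∈ K ↔ l ∈ K' := by rw [hKK]; simp [h1]
        by_cases h2 : l ∈ K' <;> by_cases h3 : l ∈ S <;> simp [h1, h2, h3, this]
    have e3 : ∀ u v w : ι → T, mix (mix B {i} ∅ u u) K' S v w =
        Function.update (mix B K' S v w) i (u i) := by
      intro u v w
      funext l
      simp only [mix]
      by_cases h1 : l = i
      · subst h1; simp [hiK', hiS]
      · simp [h1, mix]
    have hp1 : ∀ k ∈ K', ∀ i ∈ S, ∀ B : ι → T,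
      F (mix B {k} {i} x x) * F (mix B {k} {i} y y) ≤
      F (mix B {k} {i} x y) * F (mix B {k} {i} y x) :=
      fun k hk => hp k (erase_subset _ _ hk)
    have hp2 : ∀ k ∈ ({i} : Finset ι), ∀ i ∈ S, ∀ B : ι → T,
      F (mix B {k} {i} x x) * F (mix B {k} {i} y y) ≤
      F (mix B {k} {i} x y) * F (mix B {k} {i} y x) := by
      intro k hk
      rw [mem_singleton] at hk
      subst hk
      exact hp k hi
    have I1 : ∀ B : ι → T, F (mix B K' S x x) * F (mix B K' S y y) ≤
        F (mix B K' S x y) * F (mix B K' S y x) :=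
      fun B => ih (K'.card + S.card) (by omega) K' S B rfl hd' hp1
    have I2 : ∀ B : ι → T, F (mix B {i} S x x) * F (mix B {i} S y y) ≤
        F (mix B {i} S x y) * F (mix B {i} S y x) :=
      fun B => ih (({i} : Finset ι).card + S.card) (by simp; omega) {i} S B rfl hid hp2
    simp only [e2]
    have c1 := I1 (mix B {i} ∅ x x)
    have c4 := I1 (mix B {i} ∅ y y)
    have c3 := I2 (mix B K' ∅ x x)
    have c2 := I2 (mix B K' ∅ y y)
    have c5 := I1 (mix B {i} ∅ m m)
    simp only [← e1] at c2 c3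
    simp only [e3, hm] at c5
    simp only [← e3] at c5
    refine arith8 (a010 := F (mix (mix B {i} ∅ x x) K' S y y))
      (a011 := F (mix (mix B {i} ∅ x x) K' S y x))
      (a100 := F (mix (mix B {i} ∅ y y) K' S x y))
      (a101 := F (mix (mix B {i} ∅ y y) K' S x x)) c1 ?_ ?_ ?_ c5
    · exact c2
    · exact c3
    · exact c4
  intro K S B hN hd hp
  by_cases hK : K = ∅
  · subst hK
    have : ∀ u v : ι → T, mix B ∅ S u v = mix B ∅ S v v := by intro u v; funext l; simp [mix]
    rw [this x y, this y x, mul_comm]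
  by_cases hS : S = ∅
  · subst hS
    have : ∀ u v : ι → T, mix B K ∅ u v = mix B K ∅ u u := by intro u v; funext l; simp [mix]
    rw [this x y, this y x]
  have hK' := nonempty_iff_ne_empty.mpr hK
  have hS' := nonempty_iff_ne_empty.mpr hS
  by_cases h2 : 2 ≤ K.card
  · exact main K S B hN hd hp h2 hS'
  by_cases h3 : 2 ≤ S.card
  · have sw : ∀ (K S : Finset ι) (B : ι → T) (u v : ι → T), Disjoint K S →
        mix B K S u v = mix B S K v u := by
      intro K S B u v hd
      funext l
      simp only [mix]
      by_cases h2 : l ∈ K <;> by_cases h3 : l ∈ S <;> simp [h2, h3]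
      exact absurd h3 (disjoint_left.mp hd h2)
    rw [sw K S B _ _ hd, sw K S B _ _ hd, sw K S B _ _ hd, sw K S B _ _ hd,
      mul_comm (F (mix B S K y x))]
    refine main S K B (by omega) hd.symm ?_ h3 hK'
    intro k hk i hi B
    have hne : Disjoint ({k} : Finset ι) {i} := by
      simp only [disjoint_singleton]
      rintro rfl
      exact disjoint_left.mp hd hi hk
    have := hp i hi k hk B
    rw [sw _ _ B _ _ hne, sw _ _ B _ _ hne, sw _ _ B _ _ hne, sw _ _ B _ _ hne]
    rwa [mul_comm (F (mix B {i} {k} y x))]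
  · have k1 := card_pos.mpr hK'
    have s1 := card_pos.mpr hS'
    obtain ⟨k, rfl⟩ := card_eq_one.mp (by omega : K.card = 1)
    obtain ⟨i, rfl⟩ := card_eq_one.mp (by omega : S.card = 1)
    exact hp k (by simp) i (by simp) B

/-! ### The graph on pairs of domain elements -/

/-- Closure properties of the binary part of the max-product clone. -/
structure Good {D : Type} [Fintype D] [DecidableEq D] (C : (D → D → ℚ≥0) → Prop) : Prop where
  eq : C (fun s t => if s = t then 1 else 0)
  symm : ∀ f, C f → C (fun s t => f t s)
  comp : ∀ f g, C f → C g → ∀ w : D → ℚ≥0, (∀ d, w d ≤ 1) →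
    C (fun s t => univ.sup (fun d => w d * (f s d * g d t)))
  wls : ∀ f, C f → ∀ a b, f a b * f b a ≤ f a a * f b b ∨ (f a a = 0 ∧ f b b = 0)

/-- The pairs `(a,b)` and `(c,d)` are positively linked. -/
def Lk {D : Type} (C : (D → D → ℚ≥0) → Prop) (a b c d : D) : Prop :=
  ∃ f, C f ∧ f a d * f b c < f a c * f b d

/-- The pairs `(a,b)` and `(c,d)` are positively linked by a soft link. -/
def SLk {D : Type} (C : (D → D → ℚ≥0) → Prop) (a b c d : D) : Prop :=
  ∃ f, C f ∧ f a d * f b c < f a c * f b d ∧ (f a d ≠ 0 ∨ f b c ≠ 0)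

lemma exists_weights {X Y Z T : ℚ≥0} (hY : 0 < Y) (hT : 0 < T) (h : X * Z < Y * T) :
    ∃ p q : ℚ≥0, 0 < p ∧ 0 < q ∧ p ≤ 1 ∧ q ≤ 1 ∧ X * p < Y * q ∧ Z * q < T * p := by
  obtain ⟨w, hw0, h1, h2⟩ : ∃ w : ℚ≥0, 0 < w ∧ X < Y * w ∧ Z * w < T := by
    by_cases hZ : Z = 0
    · refine ⟨(X + 1) / Y, by positivity, ?_, by simp [hZ, hT]⟩
      rw [mul_div_cancel₀ _ hY.ne']
      exact lt_add_one X
    · have hZ' : 0 < Z := pos_iff_ne_zero.mpr hZ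
      have : X / Y < T / Z := by
        rw [div_lt_div_iff₀ hY hZ']
        rwa [mul_comm T]
      obtain ⟨w, hw1, hw2⟩ := exists_between this
      refine ⟨w, lt_of_le_of_lt zero_le hw1, ?_, ?_⟩
      · rw [div_lt_iff₀ hY] at hw1
        rwa [mul_comm]
      · rw [lt_div_iff₀ hZ'] at hw2
        rwa [mul_comm]
  have hp : (0 : ℚ≥0) < (1 + w)⁻¹ := by positivity
  refine ⟨(1 + w)⁻¹, w * (1 + w)⁻¹, hp, by positivity, ?_, ?_, ?_, ?_⟩
  · exact inv_le_one_of_one_le₀ (by simp)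
  · rw [← div_eq_mul_inv, div_le_one (by positivity)]
    simp
  · rw [← mul_assoc]
    exact mul_lt_mul_of_pos_right h1 hp
  · rw [← mul_assoc]
    exact mul_lt_mul_of_pos_right h2 hp

lemma comp_aux {D : Type} [Fintype D] [DecidableEq D] {C : (D → D → ℚ≥0) → Prop} (hC : Good C)
    {f g : D → D → ℚ≥0} (hf : C f) (hg : C g) {a b c d e k : D}
    (h1 : f a d * f b c < f a c * f b d) (h2 : g c k * g d e < g c e * g d k) :
    ∃ φ, C φ ∧ φ a k * φ b e < φ a e * φ b k ∧
      ((f a d ≠ 0 ∨ f b c ≠ 0 ∨ g c k ≠ 0 ∨ g d e ≠ 0) → φ a k ≠ 0 ∨ φ b e ≠ 0) := by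
  have hp1 : 0 < f a c * f b d := lt_of_le_of_lt zero_le h1
  have hp2 : 0 < g c e * g d k := lt_of_le_of_lt zero_le h2
  have hac : 0 < f a c := pos_of_mul_pos_left hp1 zero_le
  have hbd : 0 < f b d := pos_of_mul_pos_right hp1 zero_le
  have hce : 0 < g c e := pos_of_mul_pos_left hp2 zero_le
  have hdk : 0 < g d k := pos_of_mul_pos_right hp2 zero_le
  have hcd : c ≠ d := by
    rintro rfl
    rw [mul_comm] at h1
    exact lt_irrefl _ (by rwa [mul_comm (f b c)] at h1)
  obtain ⟨p, q, hp, hq, hp', hq', hX, hZ⟩ := exists_weights (X := f b c * g c k)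
    (Y := f b d * g d k) (Z := f a d * g d e) (T := f a c * g c e) (by positivity)
    (by positivity) (by
      calc f b c * g c k * (f a d * g d e) = (f a d * f b c) * (g c k * g d e) := by ring
        _ < (f a c * f b d) * (g c e * g d k) := mul_lt_mul'' h1 h2 zero_le zero_le
        _ = _ := by ring)
  let w : D → ℚ≥0 := fun z => if z = c then p else if z = d then q else 0
  have hw : ∀ z, w z ≤ 1 := by
    intro z
    simp only [w]
    split_ifs
    · exact hp'
    · exact hq'
    · simp
  have hval : ∀ s t, univ.sup (fun z => w z * (f s z * g z t)) =
      max (p * (f s c * g c t)) (q * (f s d * g d t)) := by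
    intro s t
    apply le_antisymm
    · apply Finset.sup_le
      intro z _
      simp only [w]
      split_ifs with h h'
      · subst h; exact le_max_left _ _
      · subst h'; exact le_max_right _ _
      · simp
    · apply max_le
      · have := Finset.le_sup (f := fun z => w z * (f s z * g z t)) (mem_univ c)
        simpa [w] using this
      · have := Finset.le_sup (f := fun z => w z * (f s z * g z t)) (mem_univ d)
        simpa [w, hcd.symm] using this
  refine ⟨_, hC.comp f g hf hg w hw, ?_, ?_⟩
  · simp only [hval]
    have hlow : (p * (f a c * g c e)) * (q * (f b d * g d k)) ≤
        max (p * (f a c * g c e)) (q * (f a d * g d e)) *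
        max (p * (f b c * g c k)) (q * (f b d * g d k)) :=
      mul_le_mul' (le_max_left _ _) (le_max_right _ _)
    refine lt_of_lt_of_le ?_ hlow
    rcases max_choice (p * (f a c * g c k)) (q * (f a d * g d k)) with h | h <;>
    rcases max_choice (p * (f b c * g c e)) (q * (f b d * g d e)) with h' | h' <;>
    rw [h, h']
    · calc p * (f a c * g c k) * (p * (f b c * g c e))
          = (p * (f a c * g c e)) * ((f b c * g c k) * p) := by ring
        _ < (p * (f a c * g c e)) * ((f b d * g d k) * q) :=
          mul_lt_mul_of_pos_left hX (by positivity)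
        _ = _ := by ring
    · calc p * (f a c * g c k) * (q * (f b d * g d e))
          = (p * q * (f a c * f b d)) * (g c k * g d e) := by ring
        _ < (p * q * (f a c * f b d)) * (g c e * g d k) :=
          mul_lt_mul_of_pos_left h2 (by positivity)
        _ = _ := by ring
    · calc q * (f a d * g d k) * (p * (f b c * g c e))
          = (p * q * (g c e * g d k)) * (f a d * f b c) := by ring
        _ < (p * q * (g c e * g d k)) * (f a c * f b d) :=
          mul_lt_mul_of_pos_left h1 (by positivity)
        _ = _ := by ring
    · calc q * (f a d * g d k) * (q * (f b d * g d e))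
          = (q * (f b d * g d k)) * ((f a d * g d e) * q) := by ring
        _ < (q * (f b d * g d k)) * ((f a c * g c e) * p) :=
          mul_lt_mul_of_pos_left hZ (by positivity)
        _ = _ := by ring
  · simp only [hval]
    have pz : ∀ r : ℚ≥0, 0 < r → r ≠ 0 := fun r h => h.ne'
    rintro (h | h | h | h)
    · left
      have := pos_iff_ne_zero.mpr h
      exact (lt_of_lt_of_le (by positivity) (le_max_right _ _)).ne'
    · right
      have := pos_iff_ne_zero.mpr h
      exact (lt_of_lt_of_le (by positivity) (le_max_left _ _)).ne'
    · left
      have := pos_iff_ne_zero.mpr h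
      exact (lt_of_lt_of_le (by positivity) (le_max_left _ _)).ne'
    · right
      have := pos_iff_ne_zero.mpr h
      exact (lt_of_lt_of_le (by positivity) (le_max_right _ _)).ne'

section graph

variable {D : Type} [Fintype D] [DecidableEq D] {C : (D → D → ℚ≥0) → Prop}

lemma Lk.trans (hC : Good C) {a b c d e k : D} (h1 : Lk C a b c d) (h2 : Lk C c d e k) :
    Lk C a b e k := by
  obtain ⟨f, hf, hf1⟩ := h1
  obtain ⟨g, hg, hg1⟩ := h2
  obtain ⟨φ, h, h', -⟩ := comp_aux hC hf hg hf1 hg1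
  exact ⟨φ, h, h'⟩

lemma SLk.trans (hC : Good C) {a b c d e k : D} (h1 : SLk C a b c d) (h2 : Lk C c d e k) :
    SLk C a b e k := by
  obtain ⟨f, hf, hf1, hf2⟩ := h1
  obtain ⟨g, hg, hg1⟩ := h2
  obtain ⟨φ, h, h', h''⟩ := comp_aux hC hf hg hf1 hg1
  exact ⟨φ, h, h', h'' (by tauto)⟩

lemma Lk.symm (hC : Good C) {a b c d : D} (h : Lk C a b c d) : Lk C c d a b := by
  obtain ⟨f, hf, h⟩ := h
  exact ⟨_, hC.symm f hf, by simpa [mul_comm] using h⟩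

lemma SLk.lk {a b c d : D} (h : SLk C a b c d) : Lk C a b c d := by
  obtain ⟨f, hf, h, -⟩ := h
  exact ⟨f, hf, h⟩

lemma Lk.flip {a b c d : D} (h : Lk C a b c d) : Lk C b a d c := by
  obtain ⟨f, hf, h⟩ := h
  refine ⟨f, hf, ?_⟩
  rwa [mul_comm (f b c), mul_comm (f b d)]

lemma Lk.refl (hC : Good C) {a b : D} (h : a ≠ b) : Lk C a b a b :=
  ⟨_, hC.eq, by simp [h]⟩

/-- `(a,b)` has a (necessarily hard) self-loop. -/
def Bar (C : (D → D → ℚ≥0) → Prop) (a b : D) : Prop := Lk C a b b a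

lemma Bar.hard (hC : Good C) {a b c d : D} (hB : Bar C a b) {f : D → D → ℚ≥0} (hf : C f)
    (h : f a d * f b c < f a c * f b d) : f a d = 0 ∧ f b c = 0 := by
  by_contra hcon
  have hs : SLk C a b c d := ⟨f, hf, h, by tauto⟩
  obtain ⟨g, hg, hg1, hg2⟩ := (hs.trans hC (hs.lk.symm hC)).trans hC hB
  rcases hC.wls g hg a b with h | h
  · exact absurd hg1 (not_lt.mpr h)
  · tauto

lemma Bar.of_lk (hC : Good C) {a b c d : D} (hB : Bar C a b) (h : Lk C a b c d) : Bar C c d :=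
  ((h.symm hC).trans hC hB).trans hC h.flip

lemma Bar.symm {a b : D} (hB : Bar C a b) : Bar C b a := Lk.flip hB

open Classical in
/-- The class number of a pair. -/
noncomputable def cls (C : (D → D → ℚ≥0) → Prop) (a b : D) : ℕ :=
  sInf {n | ∃ c d, Lk C a b c d ∧ n = Fintype.equivFin (D × D) (c, d)}

lemma cls_eq (hC : Good C) {a b c d : D} (h : Lk C a b c d) : cls C a b = cls C c d := by
  unfold cls
  congr 1
  ext n
  constructor
  · rintro ⟨p, q, h1, h2⟩
    exact ⟨p, q, (h.symm hC).trans hC h1, h2⟩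
  · rintro ⟨p, q, h1, h2⟩
    exact ⟨p, q, h.trans hC h1, h2⟩

lemma lk_of_cls_eq (hC : Good C) {a b : D} (hab : a ≠ b) (h : cls C a b = cls C b a) :
    Bar C a b := by
  obtain ⟨p, q, h1, h2⟩ := Nat.sInf_mem
    (⟨_, a, b, Lk.refl hC hab, rfl⟩ :
      {n | ∃ c d, Lk C a b c d ∧ n = (Fintype.equivFin (D × D) (c, d) : ℕ)}.Nonempty)
  obtain ⟨p', q', h1', h2'⟩ := Nat.sInf_mem
    (⟨_, b, a, Lk.refl hC hab.symm, rfl⟩ :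
      {n | ∃ c d, Lk C b a c d ∧ n = (Fintype.equivFin (D × D) (c, d) : ℕ)}.Nonempty)
  have h3 : (Fintype.equivFin (D × D) (p, q) : ℕ) = Fintype.equivFin (D × D) (p', q') := by
    rw [← h2, ← h2']
    exact h
  have h4 := (Fintype.equivFin (D × D)).injective (Fin.ext h3)
  simp only [Prod.mk.injEq] at h4
  obtain ⟨rfl, rfl⟩ := h4
  exact h1.trans hC (h1'.symm hC)

/-! ### Separation of an element from two others -/

/-- `o` is separated from `s` and `t` by some binary function and some pair with a loop. -/
def Sep (C : (D → D → ℚ≥0) → Prop) (o s t : D) : Prop :=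
  ∃ u v f, Bar C u v ∧ C f ∧ f u o = 0 ∧ f v o ≠ 0 ∧ f u s ≠ 0 ∧ f v s = 0 ∧ f u t ≠ 0 ∧ f v t = 0

lemma Sep.comm {o s t : D} (h : Sep C o s t) : Sep C o t s := by
  obtain ⟨u, v, f, h0, h1, h2, h3, h4, h5, h6, h7⟩ := h
  exact ⟨u, v, f, h0, h1, h2, h3, h6, h7, h4, h5⟩

lemma Sep.ne {o s t : D} (h : Sep C o s t) : o ≠ s := by
  obtain ⟨u, v, f, h0, h1, h2, h3, h4, h5, h6, h7⟩ := h
  rintro rfl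
  exact h4 h2

lemma Sep.of_bar (hC : Good C) {x y : D} (hxy : x ≠ y) (h : Bar C x y) : Sep C y x x :=
  ⟨x, y, _, h, hC.eq, by simp [hxy], by simp, by simp, by simp [hxy.symm], by simp, by simp [hxy.symm]⟩

lemma Sep.bar (hC : Good C) {o s t : D} (h : Sep C o s t) : Bar C o t := by
  obtain ⟨u, v, f, h0, h1, h2, h3, h4, h5, h6, h7⟩ := h
  refine Bar.of_lk hC h0.symm ⟨f, h1, ?_⟩
  rw [h2, h7]
  simp only [mul_zero]
  exact pos_iff_ne_zero.mpr (mul_ne_zero h3 h6)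

/-- Composition of two binary functions through three elements. -/
lemma comp3 (hC : Good C) {f g : D → D → ℚ≥0} (hf : C f) (hg : C g) (a b c : D) :
    ∃ φ, C φ ∧ ∀ s t, φ s t = max (f s a * g a t) (max (f s b * g b t) (f s c * g c t)) := by
  refine ⟨_, hC.comp f g hf hg (fun d => if d = a ∨ d = b ∨ d = c then 1 else 0) ?_, ?_⟩
  · intro d
    split_ifs <;> simp
  · intro s t
    apply le_antisymm
    · apply Finset.sup_le
      intro d _
      split_ifs with h
      · rcases h with rfl | rfl | rfl <;> simp
      · simp
    · have key : ∀ d, (d = a ∨ d = b ∨ d = c) → f s d * g d t ≤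
          univ.sup (fun d => (if d = a ∨ d = b ∨ d = c then (1 : ℚ≥0) else 0) * (f s d * g d t)) := by
        intro d hd
        have := Finset.le_sup (f := fun d => (if d = a ∨ d = b ∨ d = c then (1 : ℚ≥0) else 0) *
          (f s d * g d t)) (mem_univ d)
        simpa [hd] using this
      exact max_le (key a (by simp)) (max_le (key b (by simp)) (key c (by simp)))

lemma Sep.unique (hC : Good C) {a b c : D} (h1 : Sep C b a c) (h2 : Sep C c a b) : False := by
  obtain ⟨u, v, f, f0, f1, f2, f3, f4, f5, f6, f7⟩ := h1
  obtain ⟨u', v', g, g0, g1, g2, g3, g4, g5, g6, g7⟩ := h2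
  obtain ⟨φ, hφ, hφ'⟩ := comp3 hC f1 (hC.symm g g1) a b c
  have hvv : φ v v' = 0 := by simp [hφ', f5, f7, g7]
  have hvu : φ v u' ≠ 0 := by simp [hφ', f3, g6]
  have huv : φ u v' ≠ 0 := by simp [hφ', f6, g3]
  have huu : φ u u' ≠ 0 := by simp [hφ', f4, g4]
  have := (f0.hard hC (c := v') (d := u') hφ (by
    rw [hvv]
    simp only [mul_zero]
    exact pos_iff_ne_zero.mpr (mul_ne_zero huv hvu))).1
  exact huu this

/-- Transfer of separation. -/
lemma Sep.transfer (hC : Good C) {x y z x' y' z' : D} (h : Sep C y x z) {H : D → D → ℚ≥0}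
    (hH : C H) (hx : H x x' ≠ 0) (hy : H y y' ≠ 0) (hz : H z z' ≠ 0) (hyz : H y z' = 0) :
    Sep C y' x' z' := by
  obtain ⟨u, v, g, g0, g1, g2, g3, g4, g5, g6, g7⟩ := h
  obtain ⟨φ, hφ, hφ'⟩ := comp3 hC g1 hH x y z
  have p1 : φ v y' ≠ 0 := by simp [hφ', g3, hy]
  have p2 : φ v z' = 0 := by simp [hφ', g5, g7, hyz]
  have p3 : φ u z' ≠ 0 := by simp [hφ', g6, hz]
  have p4 : φ u y' = 0 := (g0.hard hC (c := z') (d := y') hφ (by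
    rw [p2]
    simp only [mul_zero]
    exact pos_iff_ne_zero.mpr (mul_ne_zero p3 p1))).1
  have p5 : φ u x' ≠ 0 := by simp [hφ', g4, hx]
  have p6 : φ v x' = 0 := (g0.hard hC (c := x') (d := y') hφ (by
    rw [p4]
    simp only [zero_mul]
    exact pos_iff_ne_zero.mpr (mul_ne_zero p5 p1))).2
  exact ⟨u, v, φ, g0, hφ, p4, p1, p5, p6, p3, p2⟩

end graph

/-! ### From binary projections to functions of any arity -/

section nary

variable {D : Type} [Fintype D] [DecidableEq D] {n : ℕ}

/-- Weighted binary max-projection. -/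
def hfun (F : (Fin n → D) → ℚ≥0) (i k : Fin n) (u : Fin n → D → ℚ≥0) (s t : D) : ℚ≥0 :=
  (univ.filter (fun z : Fin n → D => z i = s ∧ z k = t)).sup (fun z => F z * ∏ l, u l (z l))

/-- The maximum of a function on a box. -/
def boxMax (F : (Fin n → D) → ℚ≥0) (B : Fin n → Finset D) : ℚ≥0 := (Fintype.piFinset B).sup F

/-- Weights that are `1` inside the box and `ε` outside. -/
def bu (B : Fin n → Finset D) (i k : Fin n) (ε : ℚ≥0) (l : Fin n) (d : D) : ℚ≥0 :=
  if d ∈ B l ∨ l = i ∨ l = k then 1 else ε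

lemma boxMax_eq (F : (Fin n → D) → ℚ≥0) (B : Fin n → Finset D) {i k : Fin n} (hik : i ≠ k)
    (p q : Fin n → D) :
    boxMax F (mix B {i} {k} (fun l => {p l}) (fun l => {q l})) =
      hfun F i k (bu B i k 0) (p i) (q k) := by
  apply le_antisymm
  · apply Finset.sup_le
    intro z hz
    rw [Fintype.mem_piFinset] at hz
    have h1 : z i = p i := by simpa [mix] using hz i
    have h2 : z k = q k := by simpa [mix, hik.symm] using hz k
    have h3 : ∏ l, bu B i k 0 l (z l) = 1 := by
      apply Finset.prod_eq_one
      intro l _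
      have := hz l
      by_cases hi : l = i
      · simp [bu, hi]
      · by_cases hk : l = k
        · simp [bu, hk]
        · simp only [mix, mem_singleton, hi, hk, if_false] at this
          simp [bu, this]
    calc F z = F z * ∏ l, bu B i k 0 l (z l) := by rw [h3, mul_one]
      _ ≤ _ := Finset.le_sup (f := fun z => F z * ∏ l, bu B i k 0 l (z l)) (by simp [h1, h2])
  · apply Finset.sup_le
    intro z hz
    simp only [mem_filter, mem_univ, true_and] at hz
    by_cases hB : ∀ l, z l ∈ B l ∨ l = i ∨ l = k
    · have h3 : ∏ l, bu B i k 0 l (z l) = 1 := by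
        apply Finset.prod_eq_one
        intro l _
        simp [bu, hB l]
      rw [h3, mul_one]
      apply Finset.le_sup
      rw [Fintype.mem_piFinset]
      intro l
      have := hB l
      by_cases hi : l = i
      · subst hi; simp [mix, hz.1]
      · by_cases hk : l = k
        · subst hk; simp [mix, hz.2, hi]
        · simpa [mix, hi, hk] using this
    · push Not at hB
      obtain ⟨l, hl⟩ := hB
      have h3 : ∏ l, bu B i k 0 l (z l) = 0 := by
        apply Finset.prod_eq_zero (mem_univ l)
        simp [bu, hl]
      rw [h3]
      simp

lemma boxMax_single (F : (Fin n → D) → ℚ≥0) (p : Fin n → D) :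
    boxMax F (fun l => {p l}) = F p := by
  simp [boxMax]

lemma boxMax_update (F : (Fin n → D) → ℚ≥0) (B : Fin n → Finset D) (i : Fin n) (a b : D) :
    boxMax F (Function.update B i {a, b}) =
      max (boxMax F (Function.update B i {a})) (boxMax F (Function.update B i {b})) := by
  have hmem : ∀ (z : Fin n → D) (T : Finset D), z ∈ Fintype.piFinset (Function.update B i T) ↔
      z i ∈ T ∧ ∀ l, l ≠ i → z l ∈ B l := by
    intro z T
    rw [Fintype.mem_piFinset]
    constructor
    · intro h
      refine ⟨by simpa using h i, fun l hl => by simpa [hl] using h l⟩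
    · rintro ⟨h1, h2⟩ l
      by_cases hl : l = i
      · subst hl; simpa using h1
      · simpa [hl] using h2 l hl
  have : Fintype.piFinset (Function.update B i {a, b}) =
      Fintype.piFinset (Function.update B i {a}) ∪ Fintype.piFinset (Function.update B i {b}) := by
    ext z
    rw [mem_union, hmem, hmem, hmem]
    simp
    tauto
  rw [boxMax, this, Finset.sup_union]
  rfl

lemma box_lemma (F : (Fin n → D) → ℚ≥0) (x y : Fin n → D) (S : Finset (Fin n))
    (hp : ∀ i ∉ S, ∀ k ∈ S, ∀ B : Fin n → Finset D,
      hfun F i k (bu B i k 0) (x i) (x k) * hfun F i k (bu B i k 0) (y i) (y k) ≤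
      hfun F i k (bu B i k 0) (x i) (y k) * hfun F i k (bu B i k 0) (y i) (x k)) :
    F x * F y ≤ F (fun l => if l ∈ S then y l else x l) * F (fun l => if l ∈ S then x l else y l) := by
  have h := mix_lemma (boxMax F) (fun l => {x l}) (fun l => {y l}) (fun l => {x l, y l})
    (fun B i => boxMax_update F B i (x i) (y i)) _ Sᶜ S (fun _ => ∅) rfl disjoint_compl_left ?_
  · have e : ∀ p q : Fin n → D, boxMax F (mix (fun _ => ∅) Sᶜ S (fun l => {p l}) (fun l => {q l})) =
        F (fun l => if l ∈ S then q l else p l) := by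
      intro p q
      rw [← boxMax_single F]
      congr 1
      funext l
      by_cases hl : l ∈ S <;> simp [mix, hl]
    simpa only [e, ite_self] using h
  · intro i hi k hk B
    have hi' : i ∉ S := by simpa using hi
    have hik : i ≠ k := by
      rintro rfl
      exact hi' hk
    have := hp i hi' k hk B
    simpa only [boxMax_eq F B hik] using this

variable {C : (D → D → ℚ≥0) → Prop}

open Classical in
/-- The operation `⊓`. -/
noncomputable def infOp (C : (D → D → ℚ≥0) → Prop) (a b : D) : D :=
  if a ≠ b ∧ ¬ Bar C a b ∧ cls C b a < cls C a b then b else a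

open Classical in
/-- The operation `⊔`. -/
noncomputable def supOp (C : (D → D → ℚ≥0) → Prop) (a b : D) : D :=
  if a ≠ b ∧ ¬ Bar C a b ∧ cls C b a < cls C a b then a else b

lemma bu_le (B : Fin n → Finset D) (i k : Fin n) {ε : ℚ≥0} (hε : ε ≤ 1) (l : Fin n) (d : D) :
    bu B i k ε l d ≤ 1 := by
  unfold bu
  split_ifs
  · exact le_rfl
  · exact hε

open Classical in
lemma inf_sup_mult (hC : Good C) (F : (Fin n → D) → ℚ≥0)
    (hF : ∀ i k u, i ≠ k → (∀ l d, u l d ≤ 1) → C (hfun F i k u)) (x y : Fin n → D) :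
    F x * F y ≤ F (fun l => infOp C (x l) (y l)) * F (fun l => supOp C (x l) (y l)) := by
  have h := box_lemma F x y (univ.filter fun l => x l ≠ y l ∧ ¬ Bar C (x l) (y l) ∧
    cls C (y l) (x l) < cls C (x l) (y l)) ?_
  · simpa [infOp, supOp] using h
  · intro i hi k hk B
    have hik : i ≠ k := by
      rintro rfl
      exact hi hk
    simp only [mem_filter, mem_univ, true_and] at hi hk
    by_contra hcon
    rw [not_le] at hcon
    have hL : Lk C (x i) (y i) (x k) (y k) := ⟨_, hF i k _ hik (bu_le B i k (by simp)), hcon⟩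
    have hxy : x i ≠ y i := by
      intro he
      rw [he, mul_comm] at hcon
      exact lt_irrefl _ hcon
    have hnb : ¬ Bar C (x i) (y i) := fun hb => hk.2.1 (hb.of_lk hC hL)
    refine hi ⟨hxy, hnb, ?_⟩
    rw [cls_eq hC hL, cls_eq hC hL.flip]
    exact hk.2.2

lemma hfun_le_one {F : (Fin n → D) → ℚ≥0} (hF1 : ∀ z, F z ≤ 1) (i k : Fin n)
    {u : Fin n → D → ℚ≥0} (hu : ∀ l d, u l d ≤ 1) (s t : D) : hfun F i k u s t ≤ 1 := by
  apply Finset.sup_le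
  intro z _
  exact mul_le_one' (hF1 z) (Finset.prod_le_one' fun l _ => hu l _)

lemma hfun_mono {F : (Fin n → D) → ℚ≥0} (B : Fin n → Finset D) (i k : Fin n) (ε : ℚ≥0) (s t : D) :
    hfun F i k (bu B i k 0) s t ≤ hfun F i k (bu B i k ε) s t := by
  apply Finset.sup_mono_fun
  intro z _
  gcongr with l
  unfold bu
  split_ifs <;> simp

lemma hfun_eps {F : (Fin n → D) → ℚ≥0} (hF1 : ∀ z, F z ≤ 1) (B : Fin n → Finset D) (i k : Fin n)
    {ε : ℚ≥0} (hε : ε ≤ 1) (s t : D) (h0 : hfun F i k (bu B i k 0) s t = 0) :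
    hfun F i k (bu B i k ε) s t ≤ ε := by
  apply Finset.sup_le
  intro z hz
  have h1 : F z * ∏ l, bu B i k 0 l (z l) = 0 := by
    have h2 : F z * ∏ l, bu B i k 0 l (z l) ≤ hfun F i k (bu B i k 0) s t :=
      Finset.le_sup (f := fun z => F z * ∏ l, bu B i k 0 l (z l)) hz
    exact le_antisymm (h2.trans h0.le) zero_le
  rcases mul_eq_zero.mp h1 with h | h
  · simp [h]
  · rw [Finset.prod_eq_zero_iff] at h
    obtain ⟨l, -, hl⟩ := h
    have hle : bu B i k ε l (z l) = ε := by
      unfold bu at hl ⊢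
      split_ifs at hl ⊢ with h
      · exact absurd hl one_ne_zero
      · rfl
    have h3 : ∏ l, bu B i k ε l (z l) ≤ ε := by
      rw [← Finset.mul_prod_erase _ _ (mem_univ l), hle]
      exact mul_le_of_le_one_right' (Finset.prod_le_one' fun l _ => bu_le B i k hε l _)
    calc F z * ∏ l, bu B i k ε l (z l) ≤ 1 * ε := mul_le_mul' (hF1 z) h3
      _ = ε := one_mul _

lemma hfun_ne_zero {F : (Fin n → D) → ℚ≥0} (i k : Fin n)
    {u : Fin n → D → ℚ≥0} (hu : ∀ l d, u l d ≠ 0) (z : Fin n → D) (hz : F z ≠ 0) :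
    hfun F i k u (z i) (z k) ≠ 0 := by
  have h1 : F z * ∏ l, u l (z l) ≤ hfun F i k u (z i) (z k) :=
    Finset.le_sup (f := fun z => F z * ∏ l, u l (z l)) (by simp)
  have h2 : F z * ∏ l, u l (z l) ≠ 0 := mul_ne_zero hz (Finset.prod_ne_zero_iff.mpr fun l _ => hu l _)
  exact (lt_of_lt_of_le (pos_iff_ne_zero.mpr h2) h1).ne'

open Classical in
lemma swap_mult (hC : Good C) (F : (Fin n → D) → ℚ≥0) (hF1 : ∀ z, F z ≤ 1)
    (hF : ∀ i k u, i ≠ k → (∀ l d, u l d ≤ 1) → C (hfun F i k u)) (x y z : Fin n → D)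
    (hx : F x ≠ 0) (hy : F y ≠ 0) (hz : F z ≠ 0) :
    F y * F z ≤ F (fun l => if Sep C (y l) (x l) (z l) then z l else y l) *
      F (fun l => if Sep C (y l) (x l) (z l) then y l else z l) := by
  have h := box_lemma F y z (univ.filter fun l => ¬ Sep C (y l) (x l) (z l)) ?_
  · simp only [mem_filter, mem_univ, true_and, ite_not] at h
    rwa [mul_comm (F fun l => if Sep C (y l) (x l) (z l) then z l else y l)]
  · intro i hi k hk B
    have hik : i ≠ k := by
      rintro rfl
      exact hi hk
    simp only [mem_filter, mem_univ, true_and, not_not] at hi hk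
    by_contra hcon
    rw [not_le] at hcon
    have hbar : Bar C (y i) (z i) := hi.bar hC
    obtain ⟨h1, h2⟩ := hbar.hard hC (hF i k _ hik (bu_le B i k (by simp))) hcon
    have hpos : 0 < hfun F i k (bu B i k 0) (y i) (y k) * hfun F i k (bu B i k 0) (z i) (z k) :=
      lt_of_le_of_lt zero_le hcon
    obtain ⟨ε, hε0, hε⟩ := exists_between (lt_min hpos one_pos)
    have hε1 : ε ≤ 1 := (hε.trans_le (min_le_right _ _)).le
    have hε2 := hε.trans_le (min_le_left _ _)
    have hCε := hF i k _ hik (bu_le B i k hε1)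
    have h3 := hbar.hard hC hCε (c := y k) (d := z k) (by
      calc hfun F i k (bu B i k ε) (y i) (z k) * hfun F i k (bu B i k ε) (z i) (y k)
          ≤ ε * 1 := mul_le_mul' (hfun_eps hF1 B i k hε1 _ _ h1)
            (hfun_le_one hF1 i k (bu_le B i k hε1) _ _)
        _ < _ := by rw [mul_one]; exact hε2
        _ ≤ _ := mul_le_mul' (hfun_mono B i k ε _ _) (hfun_mono B i k ε _ _))
    have hu : ∀ l d, bu B i k ε l d ≠ 0 := by
      intro l d
      unfold bu
      split_ifs
      · exact one_ne_zero
      · exact hε0.ne'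
    exact hk (hi.transfer hC hCε (hfun_ne_zero i k hu x hx) (hfun_ne_zero i k hu y hy)
      (hfun_ne_zero i k hu z hz) h3.1)

open Classical in
/-- First majority operation. -/
noncomputable def mj1 (C : (D → D → ℚ≥0) → Prop) (a b c : D) : D :=
  if Sep C a b c then c else a

open Classical in
/-- Second majority operation. -/
noncomputable def mj2 (C : (D → D → ℚ≥0) → Prop) (a b c : D) : D :=
  if Sep C b a c then c else b

open Classical in
/-- Minority operation. -/
noncomputable def mn3 (C : (D → D → ℚ≥0) → Prop) (a b c : D) : D :=
  if Sep C b a c then b else if Sep C a b c then a else c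

open Classical in
lemma mjn_mult (hC : Good C) (F : (Fin n → D) → ℚ≥0) (hF1 : ∀ z, F z ≤ 1)
    (hF : ∀ i k u, i ≠ k → (∀ l d, u l d ≤ 1) → C (hfun F i k u)) (x y z : Fin n → D) :
    F x * F y * F z ≤ F (fun l => mj1 C (x l) (y l) (z l)) * F (fun l => mj2 C (x l) (y l) (z l)) *
      F (fun l => mn3 C (x l) (y l) (z l)) := by
  by_cases hx : F x = 0
  · simp [hx]
  by_cases hy : F y = 0
  · simp [hy]
  by_cases hz : F z = 0
  · simp [hz]
  have h1 := swap_mult hC F hF1 hF x y z hx hy hz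
  set y' := fun l => if Sep C (y l) (x l) (z l) then z l else y l with hy'
  set z' := fun l => if Sep C (y l) (x l) (z l) then y l else z l with hz'
  have hpos : 0 < F y' * F z' :=
    lt_of_lt_of_le (pos_iff_ne_zero.mpr (mul_ne_zero hy hz)) h1
  have hy0 : F y' ≠ 0 := left_ne_zero_of_mul hpos.ne'
  have hz0 : F z' ≠ 0 := right_ne_zero_of_mul hpos.ne'
  have h2 := swap_mult hC F hF1 hF y' x z' hy0 hx hz0
  have hsep : ∀ l, Sep C (x l) (y' l) (z' l) ↔ Sep C (x l) (y l) (z l) := by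
    intro l
    simp only [hy', hz']
    split_ifs with h
    · exact ⟨fun h => h.comm, fun h => h.comm⟩
    · rfl
  have e1 : (fun l => if Sep C (x l) (y' l) (z' l) then z' l else x l) =
      fun l => mj1 C (x l) (y l) (z l) := by
    funext l
    simp only [hsep, mj1]
    split_ifs with h
    · have : ¬ Sep C (y l) (x l) (z l) := fun h' => (h'.comm.unique hC h.comm)
      simp [hz', this]
    · rfl
  have e2 : (fun l => if Sep C (x l) (y' l) (z' l) then x l else z' l) =
      fun l => mn3 C (x l) (y l) (z l) := by
    funext l
    simp only [hsep, mn3]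
    by_cases h : Sep C (x l) (y l) (z l)
    · have : ¬ Sep C (y l) (x l) (z l) := fun h' => (h'.comm.unique hC h.comm)
      simp [h, this]
    · simp [h, hz']
  rw [e1, e2] at h2
  have e3 : (fun l => mj2 C (x l) (y l) (z l)) = y' := rfl
  rw [e3]
  calc F x * F y * F z = F x * (F y * F z) := by ring
    _ ≤ F x * (F y' * F z') := by gcongr
    _ = (F x * F z') * F y' := by ring
    _ ≤ (F (fun l => mj1 C (x l) (y l) (z l)) * F (fun l => mn3 C (x l) (y l) (z l))) * F y' := by
      gcongr
    _ = _ := by ring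

end nary

/-! ### The binary max-product clone -/

section clone

variable {D : Type} [Fintype D] [DecidableEq D]

/-- Definability by a pps-formula with arbitrary finite index types. -/
def Flex (𝓕 : Set (WFun D)) (F : (Fin 2 → D) → ℚ≥0) : Prop :=
  ∃ (κ J : Type) (_ : Fintype κ) (_ : DecidableEq κ) (_ : Fintype J) (ar : J → ℕ)
    (G : ∀ j : J, (Fin (ar j) → D) → ℚ≥0) (sc : ∀ j : J, Fin (ar j) → Fin 2 ⊕ κ),
    (∀ j, (⟨ar j, G j⟩ : WFun D) ∈ 𝓕 ∨ (⟨ar j, G j⟩ : WFun D) = ⟨2, EQw D⟩) ∧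
    ∀ x : Fin 2 → D, F x = ∑ y : κ → D, ∏ j, G j (fun i => Sum.elim x y (sc j i))

lemma Flex.inFClone {𝓕 : Set (WFun D)} {F : (Fin 2 → D) → ℚ≥0} (h : Flex 𝓕 F) :
    InFClone 𝓕 F := by
  obtain ⟨κ, J, _, _, _, ar, G, sc, h1, h2⟩ := h
  let eκ := Fintype.equivFin κ
  let eJ := Fintype.equivFin J
  refine ⟨Fintype.card κ, Fintype.card J, fun j => ar (eJ.symm j), fun j => G (eJ.symm j),
    fun j i => Sum.elim (Fin.castAdd _) (fun c => Fin.natAdd 2 (eκ c)) (sc (eJ.symm j) i),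
    fun j => h1 _, ?_⟩
  intro x
  rw [h2 x]
  refine Fintype.sum_equiv (Equiv.arrowCongr eκ (Equiv.refl D)) _ _ ?_
  intro y
  refine Fintype.prod_equiv eJ _ _ ?_
  intro j
  have key : ∀ j, G j (fun i => Sum.elim x y (sc j i)) =
      G j (fun i => Fin.append x ((Equiv.arrowCongr eκ (Equiv.refl D)) y)
        (Sum.elim (Fin.castAdd _) (fun c => Fin.natAdd 2 (eκ c)) (sc j i))) := by
    intro j
    congr 1
    funext i
    rcases sc j i with c | c
    · simp
    · simp [Equiv.arrowCongr]
  rw [key]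
  exact (congrArg (fun j => G j (fun i => Fin.append x
    ((Equiv.arrowCongr eκ (Equiv.refl D)) y)
    (Sum.elim (Fin.castAdd _) (fun c => Fin.natAdd 2 (eκ c)) (sc j i))))
    (eJ.symm_apply_apply j)).symm

lemma Flex.swap {𝓕 : Set (WFun D)} {F : (Fin 2 → D) → ℚ≥0} (h : Flex 𝓕 F) :
    Flex 𝓕 (fun x => F ![x 1, x 0]) := by
  obtain ⟨κ, J, i1, i2, i3, ar, G, sc, h1, h2⟩ := h
  refine ⟨κ, J, i1, i2, i3, ar, G, fun j i => Sum.map (fun c => 1 - c) id (sc j i), h1, ?_⟩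
  intro x
  show F ![x 1, x 0] = _
  rw [h2]
  refine Finset.sum_congr rfl fun y _ => Finset.prod_congr rfl fun j _ => ?_
  congr 1
  funext i
  show Sum.elim _ y (sc j i) = Sum.elim x y (Sum.map (fun c => 1 - c) id (sc j i))
  rcases sc j i with c | c
  · fin_cases c <;> simp
  · simp

lemma Flex.comp {𝓕 : Set (WFun D)} {F F' : (Fin 2 → D) → ℚ≥0} (h : Flex 𝓕 F) (h' : Flex 𝓕 F')
    (u : D → ℚ≥0) (hu : (⟨1, fun x => u (x 0)⟩ : WFun D) ∈ 𝓕) :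
    Flex 𝓕 (fun x => ∑ d, u d * (F ![x 0, d] * F' ![d, x 1])) := by
  obtain ⟨κ, J, i1, i2, i3, ar, G, sc, h1, h2⟩ := h
  obtain ⟨κ', J', i1', i2', i3', ar', G', sc', h1', h2'⟩ := h'
  refine ⟨Unit ⊕ (κ ⊕ κ'), Unit ⊕ (J ⊕ J'), inferInstance, inferInstance, inferInstance,
    Sum.elim (fun _ => 1) (Sum.elim ar ar'),
    fun j => match j with
      | Sum.inl _ => fun (x : Fin 1 → D) => u (x 0)
      | Sum.inr (Sum.inl j) => G j
      | Sum.inr (Sum.inr j) => G' j,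
    fun j => match j with
      | Sum.inl _ => fun _ => Sum.inr (Sum.inl ())
      | Sum.inr (Sum.inl j) => fun i => Sum.elim
          (fun c => if c = 0 then Sum.inl 0 else Sum.inr (Sum.inl ()))
          (fun c => Sum.inr (Sum.inr (Sum.inl c))) (sc j i)
      | Sum.inr (Sum.inr j) => fun i => Sum.elim
          (fun c => if c = 0 then Sum.inr (Sum.inl ()) else Sum.inl 1)
          (fun c => Sum.inr (Sum.inr (Sum.inr c))) (sc' j i), ?_, ?_⟩
  · rintro (j | j | j)
    · exact Or.inl hu
    · exact h1 j
    · exact h1' j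
  · intro x
    have e : ∀ Φ : (Unit ⊕ (κ ⊕ κ') → D) → ℚ≥0, ∑ y, Φ y =
        ∑ d : D, ∑ y : κ → D, ∑ y' : κ' → D, Φ (Sum.elim (fun _ => d) (Sum.elim y y')) := by
      intro Φ
      rw [← (Equiv.sumArrowEquivProdArrow Unit (κ ⊕ κ') D).symm.sum_comp, Fintype.sum_prod_type,
        ← (Equiv.funUnique Unit D).symm.sum_comp]
      refine Finset.sum_congr rfl fun d _ => ?_
      rw [← (Equiv.sumArrowEquivProdArrow κ κ' D).symm.sum_comp, Fintype.sum_prod_type]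
      rfl
    rw [e]
    refine Finset.sum_congr rfl fun d _ => ?_
    rw [h2, h2', Finset.sum_mul_sum, Finset.mul_sum]
    refine Finset.sum_congr rfl fun y _ => ?_
    rw [Finset.mul_sum]
    refine Finset.sum_congr rfl fun y' _ => ?_
    rw [Fintype.prod_sum_type, Fintype.prod_sum_type]
    simp only [Finset.univ_unique, Finset.prod_singleton]
    congr 1
    congr 1
    · refine Finset.prod_congr rfl fun j _ => ?_
      show G j _ = G j _
      congr 1
      funext i
      rcases sc j i with c | c
      · fin_cases c <;> simp
      · simp
    · refine Finset.prod_congr rfl fun j _ => ?_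
      show G' j _ = G' j _
      congr 1
      funext i
      rcases sc' j i with c | c
      · fin_cases c <;> simp
      · simp

lemma Flex.proj {𝓕 : Set (WFun D)} {n : ℕ} (F : (Fin n → D) → ℚ≥0) (hF : (⟨n, F⟩ : WFun D) ∈ 𝓕)
    (u : Fin n → D → ℚ≥0) (hu : ∀ l, (⟨1, fun x => u l (x 0)⟩ : WFun D) ∈ 𝓕) (i k : Fin n) (r : ℕ) :
    Flex 𝓕 (fun x => ∑ z ∈ univ.filter (fun z : Fin n → D => z i = x 0 ∧ z k = x 1),
      F z ^ r * ∏ l, u l (z l)) := by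
  refine ⟨Fin n, Bool ⊕ (Fin r ⊕ Fin n), inferInstance, inferInstance, inferInstance,
    Sum.elim (fun _ => 2) (Sum.elim (fun _ => n) (fun _ => 1)),
    fun j => match j with
      | Sum.inl _ => EQw D
      | Sum.inr (Sum.inl _) => F
      | Sum.inr (Sum.inr l) => fun (x : Fin 1 → D) => u l (x 0),
    fun j => match j with
      | Sum.inl b => fun (c : Fin 2) => if c = 0 then Sum.inl (if b then 0 else 1)
          else Sum.inr (if b then i else k)
      | Sum.inr (Sum.inl _) => fun c => Sum.inr c
      | Sum.inr (Sum.inr l) => fun _ => Sum.inr l, ?_, ?_⟩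
  · rintro (j | j | j)
    · exact Or.inr rfl
    · exact Or.inl hF
    · exact Or.inl (hu j)
  · intro x
    show (∑ z ∈ univ.filter (fun z : Fin n → D => z i = x 0 ∧ z k = x 1),
      F z ^ r * ∏ l, u l (z l)) = _
    rw [Finset.sum_filter]
    refine Finset.sum_congr rfl fun z _ => ?_
    rw [Fintype.prod_sum_type, Fintype.prod_sum_type]
    have h1 : ∏ b : Bool, (if x (if b then 0 else 1) = z (if b then i else k) then (1 : ℚ≥0) else 0) =
        if z i = x 0 ∧ z k = x 1 then 1 else 0 := by
      simp only [Fintype.prod_bool]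
      by_cases h1 : z i = x 0 <;> by_cases h2 : z k = x 1 <;> simp [h1, h2, eq_comm]
    have h2 : (if z i = x 0 ∧ z k = x 1 then F z ^ r * ∏ l, u l (z l) else 0) =
        (∏ b : Bool, (if x (if b then 0 else 1) = z (if b then i else k) then (1 : ℚ≥0) else 0)) *
        ((∏ _c : Fin r, F z) * ∏ l, u l (z l)) := by
      rw [h1]
      split_ifs <;> simp
    rw [h2]
    congr 1

lemma Flex.eq (𝓕 : Set (WFun D)) : Flex 𝓕 (EQw D) := by
  refine ⟨Empty, Unit, inferInstance, inferInstance, inferInstance, fun _ => 2, fun _ => EQw D,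
    fun _ i => Sum.inl i, fun _ => Or.inr rfl, ?_⟩
  intro x
  simp

lemma pow_sup_le {α : Type} (s : Finset α) (f : α → ℚ≥0) (r : ℕ) :
    (s.sup f) ^ (r + 1) ≤ ∑ a ∈ s, f a ^ (r + 1) := by
  rcases s.eq_empty_or_nonempty with rfl | hs
  · simp
  · obtain ⟨a, ha, he⟩ := Finset.exists_mem_eq_sup s hs f
    rw [he]
    exact Finset.single_le_sum (f := fun a => f a ^ (r + 1)) (fun _ _ => zero_le) ha

lemma sum_le_sup {α : Type} (s : Finset α) (f : α → ℚ≥0) (r : ℕ) :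
    ∑ a ∈ s, f a ^ r ≤ s.card * (s.sup f) ^ r := by
  rw [← nsmul_eq_mul]
  apply Finset.sum_le_card_nsmul
  intro a ha
  exact pow_le_pow_left' (Finset.le_sup ha) r

/-- The binary part of the max-product clone, via approximation of powers. -/
def C2 (𝓕 : Set (WFun D)) (f : D → D → ℚ≥0) : Prop :=
  ∃ N : ℚ≥0, ∀ r : ℕ, ∃ g : (Fin 2 → D) → ℚ≥0, Flex 𝓕 g ∧
    ∀ s t, f s t ^ (r + 1) ≤ g ![s, t] ∧ g ![s, t] ≤ N * f s t ^ (r + 1)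

lemma C2.proj {𝓕 : Set (WFun D)}
    (hcons : ∀ u : D → ℚ≥0, (∀ d, u d ≤ 1) → (⟨1, fun x => u (x 0)⟩ : WFun D) ∈ 𝓕)
    {n : ℕ} (F : (Fin n → D) → ℚ≥0) (hF : (⟨n, F⟩ : WFun D) ∈ 𝓕) (i k : Fin n)
    (u : Fin n → D → ℚ≥0) (hu : ∀ l d, u l d ≤ 1) : C2 𝓕 (hfun F i k u) := by
  refine ⟨Fintype.card (Fin n → D), fun r => ⟨_, Flex.proj F hF (fun l d => u l d ^ (r + 1))
    (fun l => hcons _ fun d => pow_le_one' (hu l d) _) i k (r + 1), ?_⟩⟩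
  intro s t
  have e : ∀ z : Fin n → D, F z ^ (r + 1) * ∏ l, u l (z l) ^ (r + 1) =
      (F z * ∏ l, u l (z l)) ^ (r + 1) := by
    intro z
    rw [mul_pow, Finset.prod_pow]
  simp only [e, Matrix.cons_val_zero, Matrix.cons_val_one]
  refine ⟨pow_sup_le _ _ r, (sum_le_sup _ _ _).trans ?_⟩
  unfold hfun
  exact mul_le_mul' (by exact_mod_cast Finset.card_le_univ _) le_rfl

lemma C2.good {𝓕 : Set (WFun D)}
    (hcons : ∀ u : D → ℚ≥0, (∀ d, u d ≤ 1) → (⟨1, fun x => u (x 0)⟩ : WFun D) ∈ 𝓕)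
    (hw : WeaklyLogSupermodular 𝓕) : Good (C2 𝓕) where
  eq := by
    refine ⟨1, fun r => ⟨_, Flex.eq 𝓕, ?_⟩⟩
    intro s t
    by_cases h : s = t <;> simp [EQw, h]
  symm := by
    rintro f ⟨N, h⟩
    refine ⟨N, fun r => ?_⟩
    obtain ⟨g, hg, hg'⟩ := h r
    exact ⟨_, hg.swap, fun s t => by simpa using hg' t s⟩
  comp := by
    rintro f g ⟨N, hf⟩ ⟨N', hg⟩ w hw
    refine ⟨N * N' * Fintype.card D, fun r => ?_⟩
    obtain ⟨p, hp, hp'⟩ := hf r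
    obtain ⟨q, hq, hq'⟩ := hg r
    refine ⟨_, hp.comp hq (fun d => w d ^ (r + 1)) (hcons _ fun d => pow_le_one' (hw d) _), ?_⟩
    intro s t
    simp only [Matrix.cons_val_zero, Matrix.cons_val_one]
    constructor
    · refine (pow_sup_le _ _ r).trans ?_
      refine Finset.sum_le_sum fun d _ => ?_
      rw [mul_pow, mul_pow]
      exact mul_le_mul' le_rfl (mul_le_mul' (hp' s d).1 (hq' d t).1)
    · calc ∑ d, w d ^ (r + 1) * (p ![s, d] * q ![d, t])
          ≤ ∑ d, N * N' * (w d * (f s d * g d t)) ^ (r + 1) := by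
            refine Finset.sum_le_sum fun d _ => ?_
            calc w d ^ (r + 1) * (p ![s, d] * q ![d, t])
                ≤ w d ^ (r + 1) * ((N * f s d ^ (r + 1)) * (N' * g d t ^ (r + 1))) :=
                  mul_le_mul' le_rfl (mul_le_mul' (hp' s d).2 (hq' d t).2)
              _ = _ := by ring
        _ = N * N' * ∑ d, (w d * (f s d * g d t)) ^ (r + 1) := by rw [Finset.mul_sum]
        _ ≤ N * N' * (Fintype.card D * (univ.sup fun d => w d * (f s d * g d t)) ^ (r + 1)) :=
          mul_le_mul' le_rfl (sum_le_sup _ _ _)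
        _ = _ := by ring
  wls := by
    rintro f ⟨N, hf⟩ a b
    by_contra hcon
    push Not at hcon
    obtain ⟨h1, h2⟩ := hcon
    set A := f a b * f b a with hA
    set B := f a a * f b b with hB
    have hA0 : 0 < A := lt_of_le_of_lt zero_le h1
    obtain ⟨r, hr⟩ : ∃ r : ℕ, N * N * B ^ (r + 1) < A ^ (r + 1) := by
      by_cases hN : N * N = 0
      · exact ⟨0, by simp [hN, hA0]⟩
      have hN' : 0 < N * N := pos_iff_ne_zero.mpr hN
      have hlt : B / A < 1 := by rwa [div_lt_one hA0]
      obtain ⟨r, hr⟩ := exists_pow_lt_of_lt_one (y := B / A) (show (0 : ℚ≥0) < 1 / (N * N) by positivity) hlt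
      refine ⟨r, ?_⟩
      have h3 : (B / A) ^ (r + 1) < 1 / (N * N) :=
        lt_of_le_of_lt (pow_le_pow_of_le_one zero_le hlt.le (Nat.le_succ r)) hr
      rw [div_pow, div_lt_div_iff₀ (by positivity) hN', one_mul] at h3
      rwa [mul_comm]
    obtain ⟨g, hg, hg'⟩ := hf r
    rcases hw g hg.inFClone a b with h | ⟨h, h'⟩
    · have h3 : A ^ (r + 1) ≤ g ![a, b] * g ![b, a] := by
        rw [hA, mul_pow]
        exact mul_le_mul' (hg' a b).1 (hg' b a).1
      have h4 : g ![a, a] * g ![b, b] ≤ N * N * B ^ (r + 1) := by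
        calc _ ≤ (N * f a a ^ (r + 1)) * (N * f b b ^ (r + 1)) :=
              mul_le_mul' (hg' a a).2 (hg' b b).2
          _ = _ := by rw [hB]; ring
      exact absurd ((h3.trans h).trans h4) (not_le.mpr hr)
    · have h3 : f a a = 0 := by
        have := (hg' a a).1
        rw [h] at this
        exact pow_eq_zero_iff (Nat.succ_ne_zero r) |>.mp (le_antisymm this zero_le)
      have h4 : f b b = 0 := by
        have := (hg' b b).1
        rw [h'] at this
        exact pow_eq_zero_iff (Nat.succ_ne_zero r) |>.mp (le_antisymm this zero_le)
      exact h2 h3 h4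

end clone

/-! ### Passing to cost functions -/

/-- Scalar version of `ν`. -/
noncomputable def nu1 (a : ℚ≥0) : ℝ≥0∞ :=
  if a = 0 then ⊤ else ENNReal.ofReal (-Real.log ((a : ℚ) : ℝ))

lemma nu1_mul {a b : ℚ≥0} (ha : a ≤ 1) (hb : b ≤ 1) : nu1 a + nu1 b = nu1 (a * b) := by
  unfold nu1
  by_cases h : a = 0
  · simp [h]
  by_cases h' : b = 0
  · simp [h']
  rw [if_neg h, if_neg h', if_neg (mul_ne_zero h h')]
  have h1 : (((a : ℚ≥0) : ℚ) : ℝ) ≤ 1 := by exact_mod_cast ha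
  have h2 : (((b : ℚ≥0) : ℚ) : ℝ) ≤ 1 := by exact_mod_cast hb
  have h3 : (((a : ℚ≥0) : ℚ) : ℝ) ≠ 0 := by exact_mod_cast h
  have h4 : (((b : ℚ≥0) : ℚ) : ℝ) ≠ 0 := by exact_mod_cast h'
  have h5 : (0 : ℝ) ≤ (((a : ℚ≥0) : ℚ) : ℝ) := by exact_mod_cast a.2
  have h6 : (0 : ℝ) ≤ (((b : ℚ≥0) : ℚ) : ℝ) := by exact_mod_cast b.2
  rw [← ENNReal.ofReal_add (by linarith [Real.log_nonpos h5 h1])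
    (by linarith [Real.log_nonpos h6 h2])]
  congr 1
  push_cast
  rw [Real.log_mul (by exact_mod_cast h3) (by exact_mod_cast h4)]
  ring

lemma nu1_anti {a b : ℚ≥0} (h : a ≤ b) : nu1 b ≤ nu1 a := by
  unfold nu1
  by_cases ha : a = 0
  · simp [ha]
  have ha' : 0 < a := pos_iff_ne_zero.mpr ha
  rw [if_neg ha, if_neg (ha'.trans_le h).ne']
  apply ENNReal.ofReal_le_ofReal
  apply neg_le_neg
  apply Real.log_le_log
  · exact_mod_cast ha'
  · exact_mod_cast h

section final

variable {D : Type} [Fintype D] [DecidableEq D] {C : (D → D → ℚ≥0) → Prop}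

lemma pair_conservative (C : (D → D → ℚ≥0) → Prop) :
    ConservativeTuple (pairTuple (infOp C) (supOp C)) := by
  intro x
  have h : ∀ f : Fin 2 → D, (Finset.univ.val.map f : Multiset D) = {f 0, f 1} := by
    intro f
    rfl
  rw [h, h]
  show ({x 0, x 1} : Multiset D) = {infOp C (x 0) (x 1), supOp C (x 0) (x 1)}
  unfold infOp supOp
  split_ifs
  · exact Multiset.pair_comm _ _
  · rfl

lemma triple_conservative (hC : Good C) :
    ConservativeTuple (tripleTuple (mj1 C) (mj2 C) (mn3 C)) := by
  intro x
  have h : ∀ f : Fin 3 → D, (Finset.univ.val.map f : Multiset D) = {f 0, f 1, f 2} := by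
    intro f
    rfl
  rw [h, h]
  show ({x 0, x 1, x 2} : Multiset D) =
    {mj1 C (x 0) (x 1) (x 2), mj2 C (x 0) (x 1) (x 2), mn3 C (x 0) (x 1) (x 2)}
  generalize x 0 = a
  generalize x 1 = b
  generalize x 2 = c
  unfold mj1 mj2 mn3
  by_cases h1 : Sep C b a c
  · have h2 : ¬ Sep C a b c := fun h2 => Sep.unique hC h1.comm h2.comm
    simp only [h1, h2, if_true, if_false]
    rw [Multiset.pair_comm b c]
  · by_cases h2 : Sep C a b c
    · simp only [h1, h2, if_true, if_false]
      simp only [Multiset.insert_eq_cons, ← Multiset.singleton_add]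
      abel
    · simp only [h1, h2, if_false]

lemma multiset_three {a b c x y : D} (h : ({a, b, c} : Multiset D) = {x, x, y}) (hxy : x ≠ y) :
    (a = x ∧ b = x ∧ c = y) ∨ (a = x ∧ b = y ∧ c = x) ∨ (a = y ∧ b = x ∧ c = x) := by
  have h1 := congrArg (Multiset.count x) h
  have h2 := congrArg (Multiset.count y) h
  simp only [Multiset.insert_eq_cons, Multiset.count_cons, Multiset.count_singleton, hxy,
    hxy.symm, if_true, if_false] at h1 h2
  by_cases ha : x = a <;> by_cases hb : x = b <;> by_cases hc : x = c <;>
    by_cases ha' : y = a <;> by_cases hb' : y = b <;> by_cases hc' : y = c <;>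
    simp_all

lemma mjn_prop (hC : Good C) {a b c x y : D} (h : ({a, b, c} : Multiset D) = {x, x, y})
    (hxy : x ≠ y) (hB : Bar C x y) : mj1 C a b c = x ∧ mj2 C a b c = x ∧ mn3 C a b c = y := by
  have hs : Sep C y x x := Sep.of_bar hC hxy hB
  have hn1 : ∀ t, ¬ Sep C x x t := fun t h => h.ne rfl
  have hn2 : ∀ t, ¬ Sep C x t x := fun t h => h.comm.ne rfl
  rcases multiset_three h hxy with ⟨rfl, rfl, rfl⟩ | ⟨rfl, rfl, rfl⟩ | ⟨rfl, rfl, rfl⟩ <;>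
    simp [mj1, mj2, mn3, hs, hn1, hn2]

lemma stp_prop (hC : Good C) {a b : D} (hB : ¬ Bar C a b) :
    infOp C a b = infOp C b a ∧ supOp C a b = supOp C b a := by
  by_cases hab : a = b
  · subst hab
    simp
  have hB' : ¬ Bar C b a := fun h => hB h.symm
  have hne : cls C a b ≠ cls C b a := fun h => hB (lk_of_cls_eq hC hab h)
  have hba : ¬ b = a := fun h => hab h.symm
  unfold infOp supOp
  rcases lt_or_gt_of_ne hne with h | h
  · simp [hab, hba, hB, hB', h, h.not_gt]
  · simp [hab, hba, hB, hB', h, h.not_gt]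

end final

end STPMJN

open STPMJN

/-- If `𝓕` contains all unary `[0,1]∩ℚ`-valued weight functions,
all of its weight functions take values in `[0,1]∩ℚ`, and `𝓕` is weakly
log-supermodular, then `ν(𝓕)` has an STP/MJN multimorphism. -/
theorem hasSTPMJN_of_weaklyLogSupermodular
    {D : Type} [Fintype D] [DecidableEq D] (hD : 2 ≤ Fintype.card D)
    (𝓕 : Set (WFun D))
    (hval : ∀ F ∈ 𝓕, ∀ x, F.2 x ≤ 1)
    (hcons : ∀ u : D → ℚ≥0, (∀ d, u d ≤ 1) → (⟨1, fun x => u (x 0)⟩ : WFun D) ∈ 𝓕)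
    (hwlsm : WeaklyLogSupermodular 𝓕) :
    HasSTPMJN (nuSet 𝓕) := by
  have hC : Good (C2 𝓕) := C2.good hcons hwlsm
  refine ⟨infOp (C2 𝓕), supOp (C2 𝓕), mj1 (C2 𝓕), mj2 (C2 𝓕), mn3 (C2 𝓕),
    {p | ¬ Bar (C2 𝓕) p.1 p.2}, ?_, pair_conservative _, triple_conservative hC, ?_, ?_, ?_, ?_⟩
  · intro a b h h'
    exact h (Bar.symm h')
  · rintro g ⟨⟨n, F⟩, hF, rfl⟩ x
    have hF1 : ∀ z, F z ≤ 1 := hval _ hF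
    have key := inf_sup_mult hC F (fun i k u _ hu => C2.proj hcons F hF i k u hu) (x 0) (x 1)
    rw [Fin.sum_univ_two, Fin.sum_univ_two]
    show nu1 (F fun l => infOp (C2 𝓕) (x 0 l) (x 1 l)) +
      nu1 (F fun l => supOp (C2 𝓕) (x 0 l) (x 1 l)) ≤ nu1 (F (x 0)) + nu1 (F (x 1))
    rw [nu1_mul (hF1 _) (hF1 _), nu1_mul (hF1 _) (hF1 _)]
    exact nu1_anti key
  · rintro g ⟨⟨n, F⟩, hF, rfl⟩ x
    have hF1 : ∀ z, F z ≤ 1 := hval _ hF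
    have key := mjn_mult hC F hF1 (fun i k u _ hu => C2.proj hcons F hF i k u hu)
      (x 0) (x 1) (x 2)
    rw [Fin.sum_univ_three, Fin.sum_univ_three]
    show nu1 (F fun l => mj1 (C2 𝓕) (x 0 l) (x 1 l) (x 2 l)) +
      nu1 (F fun l => mj2 (C2 𝓕) (x 0 l) (x 1 l) (x 2 l)) +
      nu1 (F fun l => mn3 (C2 𝓕) (x 0 l) (x 1 l) (x 2 l)) ≤
      nu1 (F (x 0)) + nu1 (F (x 1)) + nu1 (F (x 2))
    rw [nu1_mul (hF1 _) (hF1 _), nu1_mul (mul_le_one' (hF1 _) (hF1 _)) (hF1 _),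
      nu1_mul (hF1 _) (hF1 _), nu1_mul (mul_le_one' (hF1 _) (hF1 _)) (hF1 _)]
    exact nu1_anti key
  · intro a b h
    exact stp_prop hC h
  · intro a b c x y h hxy hM
    exact mjn_prop hC h hxy (not_not.mp hM)
end

section
/- If a valued constraint language Φ over a finite domain D is conservative (contains every unary cost function D → ℝ̄≥0) and weakly submodular, then the relational clone Γ = ⟨Rel(Φ)⟩_v has a majority polymorphism. -/
open scoped NNRat ENNReal

/-- The crisp cost function `Rel(f)` underlying a cost function `f`:
value `0` where `f` is finite, `∞` elsewhere. -/
noncomputable def RelC {D : Type} {k : ℕ} (f : (Fin k → D) → ℝ≥0∞) :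
    (Fin k → D) → ℝ≥0∞ :=
  fun x => if f x = ⊤ then ⊤ else 0

/-- The crisp constraint language `Rel(Φ)` underlying `Φ`. -/
def RelSet {D : Type} (Φ : Set (CFun D)) : Set (CFun D) :=
  {g | ∃ f ∈ Φ, g = ⟨f.1, RelC f.2⟩}

section Helpers

set_option linter.unusedSectionVars false
set_option linter.unusedSimpArgs false

variable {D : Type} [Fintype D] [DecidableEq D]

/-- Definability by psm-formulas with arbitrary finite index types. -/
def InV (Φ : Set (CFun D)) {ι : Type} (f : (ι → D) → ℝ≥0∞) : Prop :=
  ∃ (κ J : Type) (_ : Fintype κ) (_ : Fintype J) (g : J → CFun D)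
    (sc : ∀ j, Fin (g j).1 → ι ⊕ κ),
    (∀ j, g j ∈ Φ ∨ g j = ⟨2, eqC D⟩) ∧
    ∀ x, f x = ⨅ y : κ → D, ∑ j, (g j).2 (fun i => Sum.elim x y (sc j i))

theorem InV.toClone {Φ : Set (CFun D)} {n : ℕ} {f : (Fin n → D) → ℝ≥0∞} (h : InV Φ f) :
    InVClone Φ f := by
  obtain ⟨κ, J, _, _, g, sc, hg, hf⟩ := h
  let e := Fintype.equivFin κ
  let e' := Fintype.equivFin J
  refine ⟨Fintype.card κ, Fintype.card J, fun j => (g (e'.symm j)).1,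
    fun j => (g (e'.symm j)).2,
    fun j i => finSumFinEquiv (Sum.map id e (sc (e'.symm j) i)), fun j => hg _, fun x => ?_⟩
  rw [hf]
  refine Equiv.iInf_congr (Equiv.arrowCongr e (Equiv.refl D)) fun y => ?_
  refine Fintype.sum_equiv e'.symm _ _ fun j => ?_
  refine congrArg (g (e'.symm j)).2 (funext fun i => ?_)
  have aux : ∀ s : Fin n ⊕ κ, Fin.append x (Equiv.arrowCongr e (Equiv.refl D) y)
      (finSumFinEquiv (Sum.map id e s)) = Sum.elim x y s := by
    rintro (s | s) <;> simp [Equiv.arrowCongr]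
  exact aux _

theorem InV.subst {Φ : Set (CFun D)} {ι ι' : Type} {f : (ι → D) → ℝ≥0∞} (h : InV Φ f)
    (s : ι → ι') : InV Φ (fun x : ι' → D => f (fun i => x (s i))) := by
  obtain ⟨κ, J, _, _, g, sc, hg, hf⟩ := h
  refine ⟨κ, J, ‹_›, ‹_›, g, fun j i => Sum.map s id (sc j i), hg, fun x => ?_⟩
  simp only [hf]
  refine iInf_congr fun y => Finset.sum_congr rfl fun j _ => ?_
  refine congrArg (g j).2 (funext fun i => ?_)
  generalize sc j i = r
  rcases r with t | t <;> simp

theorem InV.atom {Φ : Set (CFun D)} (c : CFun D) (h : c ∈ Φ ∨ c = ⟨2, eqC D⟩) :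
    InV Φ c.2 := by
  refine ⟨Empty, Unit, inferInstance, inferInstance, fun _ => c, fun _ i => Sum.inl i,
    fun _ => h, fun x => ?_⟩
  simp

theorem InV.zero {Φ : Set (CFun D)} {ι : Type} : InV Φ (fun _ : ι → D => 0) := by
  refine ⟨Empty, Empty, inferInstance, inferInstance, fun j => j.elim, fun j => j.elim,
    fun j => j.elim, fun x => ?_⟩
  simp

theorem InV.add {Φ : Set (CFun D)} {ι : Type} {f f' : (ι → D) → ℝ≥0∞} (h : InV Φ f)
    (h' : InV Φ f') : InV Φ (fun x => f x + f' x) := by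
  obtain ⟨κ, J, _, _, g, sc, hg, hf⟩ := h
  obtain ⟨κ', J', _, _, g', sc', hg', hf'⟩ := h'
  refine ⟨κ ⊕ κ', J ⊕ J', inferInstance, inferInstance, Sum.elim g g',
    fun j => match j with
      | Sum.inl j => fun i => Sum.map id Sum.inl (sc j i)
      | Sum.inr j => fun i => Sum.map id Sum.inr (sc' j i), ?_, fun x => ?_⟩
  · rintro (j | j)
    · exact hg j
    · exact hg' j
  · simp only
    rw [hf, hf', ENNReal.iInf_add]
    simp_rw [ENNReal.add_iInf]
    rw [← iInf_prod (f := fun p : (κ → D) × (κ' → D) =>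
      (∑ j, (g j).2 (fun i => Sum.elim x p.1 (sc j i))) +
      ∑ j, (g' j).2 (fun i => Sum.elim x p.2 (sc' j i)))]
    refine Equiv.iInf_congr (Equiv.sumArrowEquivProdArrow κ κ' D).symm fun y => ?_
    rw [Fintype.sum_sum_type]
    congr 1
    · refine Finset.sum_congr rfl fun j _ => ?_
      simp only [Sum.elim_inl]
      refine congrArg (g j).2 (funext fun i => ?_)
      generalize sc j i = s
      rcases s with t | t <;> simp [Equiv.sumArrowEquivProdArrow]
    · refine Finset.sum_congr rfl fun j _ => ?_
      simp only [Sum.elim_inr]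
      refine congrArg (g' j).2 (funext fun i => ?_)
      generalize sc' j i = s
      rcases s with t | t <;> simp [Equiv.sumArrowEquivProdArrow]

theorem InV.sum {Φ : Set (CFun D)} {ι α : Type} (s : Finset α) (f : α → (ι → D) → ℝ≥0∞)
    (h : ∀ a ∈ s, InV Φ (f a)) : InV Φ (fun x => ∑ a ∈ s, f a x) := by
  classical
  induction s using Finset.induction_on with
  | empty => simpa using InV.zero
  | insert a s ha ih =>
    simp_rw [Finset.sum_insert ha]
    exact (h a (by simp)).add (ih fun b hb => h b (by simp [hb]))

theorem InV.inf {Φ : Set (CFun D)} {ι τ : Type} [Fintype τ] {f : (ι ⊕ τ → D) → ℝ≥0∞}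
    (h : InV Φ f) : InV Φ (fun x : ι → D => ⨅ t : τ → D, f (Sum.elim x t)) := by
  obtain ⟨κ, J, _, _, g, sc, hg, hf⟩ := h
  refine ⟨τ ⊕ κ, J, inferInstance, ‹_›, g, fun j i => Equiv.sumAssoc ι τ κ (sc j i), hg,
    fun x => ?_⟩
  simp_rw [hf]
  rw [← iInf_prod (f := fun p : (τ → D) × (κ → D) =>
      ∑ j, (g j).2 (fun i => Sum.elim (Sum.elim x p.1) p.2 (sc j i)))]
  refine Equiv.iInf_congr (Equiv.sumArrowEquivProdArrow τ κ D).symm fun y => ?_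
  refine Finset.sum_congr rfl fun j _ => ?_
  refine congrArg (g j).2 (funext fun i => ?_)
  generalize sc j i = s
  rcases s with (t | t) | t <;> simp [Equiv.sumArrowEquivProdArrow]

theorem InV.app3 {Φ : Set (CFun D)} {F : (Fin 3 → D) → ℝ≥0∞} (h : InV Φ F) {ι : Type}
    (i j k : ι) : InV Φ (fun x : ι → D => F ![x i, x j, x k]) := by
  have := h.subst ![i, j, k]
  convert this using 3 with x
  funext l
  fin_cases l <;> rfl

theorem InV.eqv {Φ : Set (CFun D)} {ι : Type} (i j : ι) :
    InV Φ (fun x : ι → D => if x i = x j then 0 else ⊤) :=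
  (InV.atom (Φ := Φ) ⟨2, eqC D⟩ (Or.inr rfl)).subst ![i, j]

theorem InV.un {Φ : Set (CFun D)}
    (hcons : ∀ u : D → ℝ≥0∞, (⟨1, fun x => u (x 0)⟩ : CFun D) ∈ Φ) {ι : Type}
    (u : D → ℝ≥0∞) (i : ι) : InV Φ (fun x : ι → D => u (x i)) :=
  (InV.atom (Φ := Φ) _ (Or.inl (hcons u))).subst (fun _ => i)

/-- Indicator of a point. -/
noncomputable def pt (c : D) (t : D) : ℝ≥0∞ := if t = c then 0 else ⊤

/-- Restriction to a two-element set, with weight on the second element. -/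
noncomputable def two (c d : D) (w : ℝ≥0∞) (t : D) : ℝ≥0∞ :=
  if t = c then 0 else if t = d then w else ⊤

theorem pt_ne {c t : D} (h : pt c t ≠ ⊤) : t = c := by
  by_contra h'
  simp [pt, h'] at h

theorem two_ne {c d t : D} {w : ℝ≥0∞} (h : two c d w t ≠ ⊤) : t = c ∨ t = d := by
  by_contra! h'
  simp [two, h'.1, h'.2] at h

theorem bound_exists {α : Type} [Fintype α] (F : α → ℝ≥0∞) :
    ∃ M : NNReal, ∀ x, F x ≠ ⊤ → F x ≤ M := by
  classical
  refine ⟨∑ x, (F x).toNNReal, fun x hx => ?_⟩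
  rw [← ENNReal.coe_toNNReal hx]
  exact_mod_cast Finset.single_le_sum (f := fun x => (F x).toNNReal) (fun _ _ => zero_le)
    (Finset.mem_univ x)

theorem ternary {Φ : Set (CFun D)}
    (hcons : ∀ u : D → ℝ≥0∞, (⟨1, fun x => u (x 0)⟩ : CFun D) ∈ Φ)
    (hws : WeaklySubmodular Φ) {F : (Fin 3 → D) → ℝ≥0∞} (hF : InV Φ F)
    {a₁ a₂ a₃ b₁ b₂ b₃ : D} (h1 : F ![b₁, a₂, a₃] ≠ ⊤) (h2 : F ![a₁, b₂, a₃] ≠ ⊤)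
    (h3 : F ![a₁, a₂, b₃] ≠ ⊤) : F ![a₁, a₂, a₃] ≠ ⊤ := by
  intro h0
  obtain ⟨M, hM⟩ := bound_exists F
  have n1 : b₁ ≠ a₁ := by rintro rfl; exact h1 h0
  have n2 : b₂ ≠ a₂ := by rintro rfl; exact h2 h0
  have n3 : b₃ ≠ a₃ := by rintro rfl; exact h3 h0
  have k1 := hM _ h1
  have k2 := hM _ h2
  have k3 := hM _ h3
  set w : NNReal := 6 * M + 1 with hw
  by_cases hc : F ![b₁, b₂, a₃] ≠ ⊤ ∨ F ![a₁, b₂, b₃] ≠ ⊤ ∨ F ![b₁, a₂, b₃] ≠ ⊤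
  · let G : D → D → (Fin 5 → D) → ℝ≥0∞ := fun p q y =>
      F ![p, y 0, y 4] + F ![y 2, y 0, y 1] + F ![q, y 3, y 1] +
        two a₂ b₂ w (y 0) + two a₃ b₃ w (y 1) + pt a₁ (y 2) + pt a₂ (y 3) + pt a₃ (y 4)
    have hG : InV Φ (fun x : Fin 2 → D => ⨅ y, G (x 0) (x 1) y) := by
      refine InV.inf (Φ := Φ) (f := fun z : Fin 2 ⊕ Fin 5 → D =>
        F ![z (.inl 0), z (.inr 0), z (.inr 4)] + F ![z (.inr 2), z (.inr 0), z (.inr 1)] +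
        F ![z (.inl 1), z (.inr 3), z (.inr 1)] +
        two a₂ b₂ w (z (.inr 0)) + two a₃ b₃ w (z (.inr 1)) + pt a₁ (z (.inr 2)) +
        pt a₂ (z (.inr 3)) + pt a₃ (z (.inr 4))) ?_
      exact (((((((hF.app3 _ _ _).add (hF.app3 _ _ _)).add (hF.app3 _ _ _)).add
        (InV.un hcons _ _)).add (InV.un hcons _ _)).add (InV.un hcons _ _)).add
        (InV.un hcons _ _)).add (InV.un hcons _ _)
    have key := hws _ hG.toClone a₁ b₁
    simp only [Matrix.cons_val_zero, Matrix.cons_val_one] at key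
    have up : ∀ p q s t, (⨅ y, G p q y) ≤ F ![p, s, a₃] + F ![a₁, s, t] + F ![q, a₂, t] +
        two a₂ b₂ w s + two a₃ b₃ w t := by
      intro p q s t
      refine (iInf_le _ ![s, t, a₁, a₂, a₃]).trans ?_
      simp [G, pt]
    have lo : ∀ p q (L : ℝ≥0∞), (∀ s t, (s = a₂ ∨ s = b₂) → (t = a₃ ∨ t = b₃) →
        F ![p, s, a₃] ≠ ⊤ → F ![a₁, s, t] ≠ ⊤ → F ![q, a₂, t] ≠ ⊤ →
        L ≤ two a₂ b₂ w s + two a₃ b₃ w t) → L ≤ ⨅ y, G p q y := by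
      intro p q L hL
      refine le_iInf fun y => ?_
      by_cases ht : G p q y = ⊤
      · simp [ht]
      · have ht' := ht
        simp only [G, ENNReal.add_eq_top, not_or] at ht'
        obtain ⟨⟨⟨⟨⟨⟨⟨q1, q2⟩, q3⟩, q4⟩, q5⟩, q6⟩, q7⟩, q8⟩ := ht'
        rw [pt_ne q8] at q1
        rw [pt_ne q6] at q2
        rw [pt_ne q7] at q3
        refine (hL _ _ (two_ne q4) (two_ne q5) q1 q2 q3).trans ?_
        simp only [G]
        rw [pt_ne q6, pt_ne q7, pt_ne q8]
        simp only [pt, if_true, add_zero]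
        rw [add_assoc]
        exact le_add_self
    have u1 := up a₁ b₁ b₂ a₃
    have u2 := up b₁ a₁ a₂ b₃
    have l1 : (2 * w : ℝ≥0∞) ≤ ⨅ y, G a₁ a₁ y := by
      refine lo _ _ _ ?_
      rintro s t (rfl | rfl) (rfl | rfl) q1 q2 q3 <;> simp_all [two, two_mul]
    have l2 : (w : ℝ≥0∞) ≤ ⨅ y, G b₁ b₁ y := by
      refine lo _ _ _ ?_
      rintro s t (rfl | rfl) (rfl | rfl) q1 q2 q3 <;> simp_all [two]
    have fin : ¬ ((⨅ y, G a₁ a₁ y) = ⊤ ∧ (⨅ y, G b₁ b₁ y) = ⊤) := by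
      rintro ⟨t1, t2⟩
      rcases hc with hc | hc | hc
      · have := up b₁ b₁ b₂ a₃
        simp [t2, two, n2, hc, h1, h2, h3] at this
      · have := up a₁ a₁ b₂ b₃
        simp [t1, two, n2, n3, hc, h1, h2, h3] at this
      · have := up b₁ b₁ a₂ b₃
        simp [t2, two, n3, hc, h1, h2, h3] at this
    rcases key with key | key
    · have c1 : (⨅ y, G a₁ b₁ y) ≤ M + M + M + w := by
        refine u1.trans ?_
        simp only [two, n2, if_true, if_false, add_zero]
        gcongr
      have c2 : (⨅ y, G b₁ a₁ y) ≤ M + M + M + w := by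
        refine u2.trans ?_
        simp only [two, n3, if_true, if_false, add_zero]
        gcongr
      have := ((add_le_add l1 l2).trans key).trans (add_le_add c1 c2)
      have h' : 2 * w + w ≤ (M + M + M + w) + (M + M + M + w) := by exact_mod_cast this
      have h'' : (2 * w + w : ℝ) ≤ (M + M + M + w) + (M + M + M + w) := by exact_mod_cast h'
      have hw' : (w : ℝ) = 6 * M + 1 := by rw [hw]; push_cast; ring
      linarith
    · exact fin key
  · push Not at hc
    obtain ⟨e1, e2, e3⟩ := hc
    let G : D → D → (Fin 5 → D) → ℝ≥0∞ := fun p q y =>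
      F ![p, y 0, y 1] + F ![y 3, y 0, y 2] + F ![q, y 4, y 2] +
        two a₃ b₃ w (y 1) + two a₂ b₂ 0 (y 0) + two a₃ b₃ 0 (y 2) + pt a₁ (y 3) + pt a₂ (y 4)
    have hG : InV Φ (fun x : Fin 2 → D => ⨅ y, G (x 0) (x 1) y) := by
      refine InV.inf (Φ := Φ) (f := fun z : Fin 2 ⊕ Fin 5 → D =>
        F ![z (.inl 0), z (.inr 0), z (.inr 1)] + F ![z (.inr 3), z (.inr 0), z (.inr 2)] +
        F ![z (.inl 1), z (.inr 4), z (.inr 2)] +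
        two a₃ b₃ w (z (.inr 1)) + two a₂ b₂ 0 (z (.inr 0)) + two a₃ b₃ 0 (z (.inr 2)) +
        pt a₁ (z (.inr 3)) + pt a₂ (z (.inr 4))) ?_
      exact (((((((hF.app3 _ _ _).add (hF.app3 _ _ _)).add (hF.app3 _ _ _)).add
        (InV.un hcons _ _)).add (InV.un hcons _ _)).add (InV.un hcons _ _)).add
        (InV.un hcons _ _)).add (InV.un hcons _ _)
    have key := hws _ hG.toClone a₁ b₁
    simp only [Matrix.cons_val_zero, Matrix.cons_val_one] at key
    have up : ∀ p q s t z, (⨅ y, G p q y) ≤ F ![p, s, t] + F ![a₁, s, z] + F ![q, a₂, z] +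
        two a₃ b₃ w t + two a₂ b₂ 0 s + two a₃ b₃ 0 z := by
      intro p q s t z
      refine (iInf_le _ ![s, t, z, a₁, a₂]).trans ?_
      simp [G, pt]
    have l1 : (w : ℝ≥0∞) ≤ ⨅ y, G a₁ a₁ y := by
      refine le_iInf fun y => ?_
      by_cases ht : G a₁ a₁ y = ⊤
      · simp [ht]
      · have ht' := ht
        simp only [G, ENNReal.add_eq_top, not_or] at ht'
        obtain ⟨⟨⟨⟨⟨⟨⟨q1, q2⟩, q3⟩, q4⟩, q5⟩, q6⟩, q7⟩, q8⟩ := ht'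
        rw [pt_ne q7] at q2
        rw [pt_ne q8] at q3
        have hb : y 1 = b₃ := by
          rcases two_ne q4 with hy | hy
          · exfalso
            rcases two_ne q5 with hy' | hy' <;> rcases two_ne q6 with hy'' | hy'' <;>
              simp_all
          · exact hy
        have : two a₃ b₃ (w : ℝ≥0∞) (y 1) = w := by simp [two, hb, n3]
        simp only [G, this]
        refine le_trans ?_ (le_trans (le_trans (le_trans le_self_add le_self_add)
          le_self_add) le_self_add)
        exact le_add_self
    have u0 := up a₁ a₁ a₂ b₃ b₃
    have u1 := up a₁ b₁ b₂ a₃ a₃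
    have u2 := up b₁ a₁ a₂ a₃ b₃
    rcases key with key | key
    · have c1 : (⨅ y, G a₁ b₁ y) ≤ M + M + M := by
        refine u1.trans ?_
        simp only [two, n2, if_true, if_false, add_zero]
        gcongr
      have c2 : (⨅ y, G b₁ a₁ y) ≤ M + M + M := by
        refine u2.trans ?_
        simp only [two, n3, if_true, if_false, add_zero]
        gcongr
      have := ((l1.trans le_self_add).trans key).trans (add_le_add c1 c2)
      have h' : w ≤ (M + M + M) + (M + M + M) := by exact_mod_cast this
      have h'' : (w : ℝ) ≤ (M + M + M) + (M + M + M) := by exact_mod_cast h'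
      have hw' : (w : ℝ) = 6 * M + 1 := by rw [hw]; push_cast; ring
      linarith
    · simp [key.1, two, n3, h3] at u0

theorem decomp {Φ : Set (CFun D)}
    (hcons : ∀ u : D → ℝ≥0∞, (⟨1, fun x => u (x 0)⟩ : CFun D) ∈ Φ)
    (hws : WeaklySubmodular Φ) {ι : Type} [Fintype ι] [DecidableEq ι]
    {f : (ι → D) → ℝ≥0∞} (hf : InV Φ f)
    (a : ι → D) (h2 : ∀ S : Finset ι, S.card ≤ 2 → ∃ t, f t ≠ ⊤ ∧ ∀ i ∈ S, t i = a i) :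
    ∀ (n : ℕ) (S : Finset ι), S.card = n → ∃ t, f t ≠ ⊤ ∧ ∀ i ∈ S, t i = a i := by
  intro n
  induction n with
  | zero => exact fun S hS => h2 S (by omega)
  | succ n ih =>
    intro S hS
    by_cases hn : n + 1 ≤ 2
    · exact h2 S (by omega)
    obtain ⟨i, j, k, hi, hj, hk, hij, hik, hjk⟩ := Finset.two_lt_card_iff.mp
      (show 2 < S.card by omega)
    obtain ⟨ti, fi, gi⟩ := ih (S.erase i) (by rw [Finset.card_erase_of_mem hi]; omega)
    obtain ⟨tj, fj, gj⟩ := ih (S.erase j) (by rw [Finset.card_erase_of_mem hj]; omega)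
    obtain ⟨tk, fk, gk⟩ := ih (S.erase k) (by rw [Finset.card_erase_of_mem hk]; omega)
    let T : Finset ι := ((S.erase i).erase j).erase k
    let G : (Fin 3 → D) → (ι → D) → ℝ≥0∞ := fun x t =>
      f t + (∑ s ∈ T, pt (a s) (t s)) + (if x 0 = t i then 0 else ⊤) +
        (if x 1 = t j then 0 else ⊤) + (if x 2 = t k then 0 else ⊤)
    have hG : InV Φ (fun x : Fin 3 → D => ⨅ t, G x t) := by
      refine InV.inf (Φ := Φ) (f := fun z : Fin 3 ⊕ ι → D =>
        f (fun l => z (.inr l)) + (∑ s ∈ T, pt (a s) (z (.inr s))) +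
        (if z (.inl 0) = z (.inr i) then 0 else ⊤) +
        (if z (.inl 1) = z (.inr j) then 0 else ⊤) +
        (if z (.inl 2) = z (.inr k) then 0 else ⊤)) ?_
      exact ((((hf.subst _).add (InV.sum T _ fun s _ => InV.un hcons _ _)).add
        (InV.eqv _ _)).add (InV.eqv _ _)).add (InV.eqv _ _)
    have up : ∀ t, f t ≠ ⊤ → (∀ s ∈ T, t s = a s) → (⨅ t', G ![t i, t j, t k] t') ≠ ⊤ := by
      intro t ht hs
      refine ne_top_of_le_ne_top ?_ (iInf_le _ t)
      have : ∑ s ∈ T, pt (a s) (t s) = 0 :=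
        Finset.sum_eq_zero fun s hs' => by simp [pt, hs s hs']
      simp [G, this, ht]
    have e1 := up ti fi (by intro s hs; apply gi; simp [T] at hs ⊢; tauto)
    have e2 := up tj fj (by intro s hs; apply gj; simp [T] at hs ⊢; tauto)
    have e3 := up tk fk (by intro s hs; apply gk; simp [T] at hs ⊢; tauto)
    rw [gi j (by simp [hj, hij.symm]), gi k (by simp [hk, hik.symm])] at e1
    rw [gj i (by simp [hi, hij]), gj k (by simp [hk, hjk.symm])] at e2
    rw [gk i (by simp [hi, hik]), gk j (by simp [hj, hjk])] at e3
    have e0 := ternary hcons hws hG e1 e2 e3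
    simp only [ne_eq, iInf_eq_top, not_forall] at e0
    obtain ⟨t, ht⟩ := e0
    simp only [G, ENNReal.add_eq_top, not_or, ENNReal.sum_eq_top, not_exists, not_and] at ht
    obtain ⟨⟨⟨⟨q1, q2⟩, q3⟩, q4⟩, q5⟩ := ht
    have q3' : a i = t i := by by_contra h; simp [h] at q3
    have q4' : a j = t j := by by_contra h; simp [h] at q4
    have q5' : a k = t k := by by_contra h; simp [h] at q5
    refine ⟨t, q1, fun s hs => ?_⟩
    by_cases si : s = i
    · rw [si, q3']
    by_cases sj : s = j
    · rw [sj, q4']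
    by_cases sk : s = k
    · rw [sk, q5']
    exact pt_ne (q2 s (by simp [T, hs, si, sj, sk]))

/-- Every relation in the relational clone is the support of a definable cost function. -/
theorem lift_rel {Φ : Set (CFun D)} {k : ℕ} {g : (Fin k → D) → ℝ≥0∞}
    (h : InVClone (RelSet Φ) g) :
    ∃ f : (Fin k → D) → ℝ≥0∞, InV Φ f ∧ ∀ x, f x = ⊤ ↔ g x = ⊤ := by
  obtain ⟨κ, m, ar, r, sc, hr, hg⟩ := h
  have : ∀ j, ∃ r' : (Fin (ar j) → D) → ℝ≥0∞,
      ((⟨ar j, r'⟩ : CFun D) ∈ Φ ∨ (⟨ar j, r'⟩ : CFun D) = ⟨2, eqC D⟩) ∧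
      ∀ x, r' x = ⊤ ↔ r j x = ⊤ := by
    intro j
    rcases hr j with ⟨⟨n, f⟩, hf, he⟩ | he
    · generalize r j = rj at he
      generalize ar j = n' at rj he
      simp only at he
      cases he
      refine ⟨f, Or.inl hf, fun x => ?_⟩
      simp [RelC]
    · exact ⟨r j, Or.inr he, fun x => Iff.rfl⟩
  choose r' hr' hrr using this
  refine ⟨fun x => ⨅ y : Fin κ → D, ∑ j, r' j (fun i => Fin.append x y (sc j i)),
    ⟨Fin κ, Fin m, inferInstance, inferInstance, fun j => ⟨ar j, r' j⟩,
      fun j i => finSumFinEquiv.symm (sc j i), hr', fun x => ?_⟩, fun x => ?_⟩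
  · refine iInf_congr fun y => Finset.sum_congr rfl fun j _ => ?_
    simp only
    congr 1
    funext i
    obtain ⟨s, hs⟩ := finSumFinEquiv.surjective (sc j i)
    rw [← hs]
    rcases s with s | s <;> simp
  · rw [hg]
    simp only [iInf_eq_top, ENNReal.sum_eq_top, hrr]

end Helpers

/-- If a valued constraint language `Φ` is conservative and
weakly submodular, then the relational clone `Γ = ⟨Rel(Φ)⟩_v` has a majority
polymorphism. -/
theorem majority_of_conservative_weaklySubmodular
    {D : Type} [Fintype D] [DecidableEq D] (hD : 2 ≤ Fintype.card D)
    (Φ : Set (CFun D))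
    (hcons : ∀ u : D → ℝ≥0∞, (⟨1, fun x => u (x 0)⟩ : CFun D) ∈ Φ)
    (hws : WeaklySubmodular Φ) :
    ∃ ρ : D → D → D → D,
      (∀ a b : D, ρ a a b = a ∧ ρ a b a = a ∧ ρ b a a = a) ∧
      ∀ (k : ℕ) (g : (Fin k → D) → ℝ≥0∞), InVClone (RelSet Φ) g →
        ∀ x y z : Fin k → D, g x ≠ ⊤ → g y ≠ ⊤ → g z ≠ ⊤ →
          g (fun i => ρ (x i) (y i) (z i)) ≠ ⊤ := by
  classical
  let e : Fin 3 → (D × D × D → D) := ![fun p => p.1, fun p => p.2.1, fun p => p.2.2]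
  let Bad : (D × D × D → D) → Prop := fun ρ =>
    ∃ f : ((D × D × D → D) → ℝ≥0∞), InV Φ f ∧ (∀ l, f (e l) ≠ ⊤) ∧ f ρ = ⊤
  have hch : ∀ ρ : D × D × D → D, ∃ f : ((D × D × D → D) → ℝ≥0∞),
      InV Φ f ∧ (∀ l, f (e l) ≠ ⊤) ∧ (Bad ρ → f ρ = ⊤) := by
    intro ρ
    by_cases hb : Bad ρ
    · obtain ⟨f, h1, h2, h3⟩ := hb
      exact ⟨f, h1, h2, fun _ => h3⟩
    · exact ⟨fun _ => 0, InV.zero, by simp, fun h => absurd h hb⟩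
  choose F hF hFe hFb using hch
  let G : (D × D × D → D) → ℝ≥0∞ := fun x => ∑ ρ, F ρ x
  have hG : InV Φ G := InV.sum _ _ fun ρ _ => hF ρ
  have hGe : ∀ l, G (e l) ≠ ⊤ := fun l => by
    simp only [G, ne_eq, ENNReal.sum_eq_top, not_exists, not_and]
    exact fun ρ _ => hFe ρ l
  let maj : D × D × D → D := fun p => if p.1 = p.2.1 then p.1 else p.2.2
  let N : Finset (D × D × D) :=
    Finset.univ.filter fun p => p.1 = p.2.1 ∨ p.1 = p.2.2 ∨ p.2.1 = p.2.2
  let ι := {p : D × D × D // p ∈ N}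
  -- at any two coordinates of `N` some projection agrees with `maj`
  have two_agree : ∀ p ∈ N, ∀ q ∈ N, ∃ l, e l p = maj p ∧ e l q = maj q := by
    rintro ⟨p1, p2, p3⟩ hp ⟨q1, q2, q3⟩ hq
    simp only [N, Finset.mem_filter, Finset.mem_univ, true_and] at hp hq
    simp only [Fin.exists_fin_succ, e, maj, Matrix.cons_val_zero, Matrix.cons_val_succ]
    grind
  let H : (ι → D) → ℝ≥0∞ := fun x => ⨅ t : D × D × D → D,
    (G t + ∑ p : ι, if x p = t p.1 then 0 else ⊤)
  have hH : InV Φ H := by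
    refine InV.inf (Φ := Φ) (f := fun z : ι ⊕ (D × D × D) → D =>
      G (fun l => z (.inr l)) + ∑ p : ι, if z (.inl p) = z (.inr p.1) then 0 else ⊤) ?_
    exact (hG.subst _).add (InV.sum _ _ fun p _ => InV.eqv _ _)
  have hHe : ∀ l, H (fun p => e l p.1) ≠ ⊤ := fun l =>
    ne_top_of_le_ne_top (by simpa using hGe l) (iInf_le _ (e l))
  obtain ⟨t, ht, hta⟩ := decomp hcons hws hH (fun p => maj p.1) (by
    intro S hS
    have : ∃ l, ∀ p ∈ S, e l p.1 = maj p.1 := by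
      rcases Nat.lt_or_ge S.card 2 with h | h
      · rcases S.eq_empty_or_nonempty with rfl | ⟨p, hp⟩
        · exact ⟨0, by simp⟩
        · obtain ⟨l, hl, -⟩ := two_agree p.1 p.2 p.1 p.2
          refine ⟨l, fun q hq => ?_⟩
          rw [Finset.card_le_one.mp (by omega) q hq p hp]
          exact hl
      · obtain ⟨p, q, -, rfl⟩ := Finset.card_eq_two.mp (show S.card = 2 by omega)
        obtain ⟨l, hl, hl'⟩ := two_agree p.1 p.2 q.1 q.2
        refine ⟨l, fun r hr => ?_⟩
        simp only [Finset.mem_insert, Finset.mem_singleton] at hr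
        rcases hr with rfl | rfl
        · exact hl
        · exact hl'
    obtain ⟨l, hl⟩ := this
    exact ⟨_, hHe l, hl⟩) _ Finset.univ rfl
  simp only [H, ne_eq, iInf_eq_top, not_forall] at ht
  obtain ⟨ρ, hρ⟩ := ht
  simp only [ENNReal.add_eq_top, not_or, ENNReal.sum_eq_top, not_exists, not_and] at hρ
  obtain ⟨hρG, hρt⟩ := hρ
  have hρm : ∀ p ∈ N, ρ p = maj p := by
    intro p hp
    have h1 := hρt ⟨p, hp⟩ (Finset.mem_univ _)
    have h2 := hta ⟨p, hp⟩ (Finset.mem_univ _)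
    by_contra h
    apply h1
    rw [if_neg]
    rw [h2]
    exact fun h' => h h'.symm
  have hnb : ¬ Bad ρ := by
    intro hb
    apply hρG
    simp only [G, ENNReal.sum_eq_top]
    exact ⟨ρ, Finset.mem_univ _, hFb ρ hb⟩
  refine ⟨fun a b c => ρ (a, b, c), fun a b => ⟨?_, ?_, ?_⟩, ?_⟩
  · refine (hρm (a, a, b) (by simp [N])).trans ?_
    simp [maj]
  · refine (hρm (a, b, a) (by simp [N])).trans ?_
    simp [maj]
  · refine (hρm (b, a, a) (by simp [N])).trans ?_
    simp only [maj]
    split_ifs with h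
    · exact h
    · rfl
  · intro k g hg x y z hx hy hz hbad
    obtain ⟨f, hf, hfg⟩ := lift_rel hg
    refine hnb ⟨_, hf.subst (fun i => (x i, y i, z i)), ?_, ?_⟩
    · intro l
      fin_cases l
      · exact fun h => hx ((hfg _).1 h)
      · exact fun h => hy ((hfg _).1 h)
      · exact fun h => hz ((hfg _).1 h)
    · exact (hfg _).2 hbad
end

section
/- Let Γ be a conservative relational clone with finite domain D. Then at least one of the following holds: (i) there are distinct a,b ∈ D such that N(a,b,a,b) ∈ Γ; (ii) there are distinct a,b ∈ D such that the ternary relation {(a,a,a),(a,b,b),(b,a,b),(b,b,a)} ∈ Γ; (iii) for some k ≥ 1 there are a₀,…,a_{2k}, b₀,…,b_{2k} ∈ D such that aᵢ ≠ bᵢ for each 0 ≤ i ≤ 2k, N(aᵢ,bᵢ,a_{i+1},b_{i+1}) ∈ Γ for each 0 ≤ i ≤ 2k−1, and N(a_{2k},b_{2k},a₀,b₀) ∈ Γ; (iv) Γ has a majority polymorphism. -/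
open scoped NNRat ENNReal

/-- The crisp binary cost function representing the relation
`N(a,b,c,d) = {(a,c), (b,c), (a,d)}`. -/
noncomputable def Ncrisp {D : Type} [DecidableEq D] (a b c d : D) :
    (Fin 2 → D) → ℝ≥0∞ :=
  fun x =>
    if (x 0 = a ∧ x 1 = c) ∨ (x 0 = b ∧ x 1 = c) ∨ (x 0 = a ∧ x 1 = d) then 0 else ⊤

namespace Takh

/-- An atomic formula with variables in `ι`. -/
abbrev Atom (D ι : Type) : Type := Σ g : CFun D, (Fin g.1 → ι)

/-- An assignment makes an atom finite. -/
def Atom.Holds {D ι : Type} (A : Atom D ι) (x : ι → D) : Prop :=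
  A.1.2 (fun i => x (A.2 i)) ≠ ⊤

/-- Renaming of the variables of an atom. -/
def Atom.ren {D ι ι' : Type} (σ : ι → ι') (A : Atom D ι) : Atom D ι' :=
  ⟨A.1, fun i => σ (A.2 i)⟩

theorem Atom.holds_ren {D ι ι' : Type} (σ : ι → ι') (A : Atom D ι) (x : ι' → D) :
    (A.ren σ).Holds x ↔ A.Holds (fun i => x (σ i)) := Iff.rfl

/-- Primitive positive definability, with arbitrary variable sets. -/
def PP {D : Type} [DecidableEq D] (Φ : Set (CFun D)) {ι : Type} (R : (ι → D) → Prop) : Prop :=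
  ∃ (κ : Type) (_ : Finite κ) (L : List (Atom D (ι ⊕ κ))),
    (∀ A ∈ L, A.1 ∈ Φ ∨ A.1 = ⟨2, eqC D⟩) ∧
    ∀ x, R x ↔ ∃ y : κ → D, ∀ A ∈ L, A.Holds (Sum.elim x y)

section
variable {D : Type} [DecidableEq D] {Φ : Set (CFun D)}

theorem PP.congr {ι : Type} {R S : (ι → D) → Prop} (h : PP Φ R) (e : ∀ x, R x ↔ S x) :
    PP Φ S := by
  have : R = S := funext fun x => propext (e x)
  exact this ▸ h

theorem PP.pull {ι ι' : Type} {R : (ι → D) → Prop} (h : PP Φ R) (σ : ι → ι') :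
    PP Φ (fun x : ι' → D => R (fun i => x (σ i))) := by
  obtain ⟨κ, hκ, L, hL, hR⟩ := h
  refine ⟨κ, hκ, L.map (Atom.ren (Sum.map σ id)), ?_, ?_⟩
  · intro A hA
    obtain ⟨B, hB, rfl⟩ := List.mem_map.1 hA
    exact hL B hB
  · intro x
    beta_reduce
    rw [hR]
    refine exists_congr fun y => ?_
    rw [List.forall_mem_map]
    refine forall₂_congr fun A _ => ?_
    rw [Atom.holds_ren]
    have : (fun i => Sum.elim x y (Sum.map σ id i)) = Sum.elim (fun i => x (σ i)) y := by
      funext i; cases i <;> rfl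
    rw [this]

theorem PP.and {ι : Type} {R S : (ι → D) → Prop} (h : PP Φ R) (h' : PP Φ S) :
    PP Φ (fun x => R x ∧ S x) := by
  obtain ⟨κ, hκ, L, hL, hR⟩ := h
  obtain ⟨κ', hκ', L', hL', hS⟩ := h'
  refine ⟨κ ⊕ κ', inferInstance, L.map (Atom.ren (Sum.map id Sum.inl)) ++
    L'.map (Atom.ren (Sum.map id Sum.inr)), ?_, ?_⟩
  · intro A hA
    rcases List.mem_append.1 hA with hA | hA
    · obtain ⟨B, hB, rfl⟩ := List.mem_map.1 hA
      exact hL B hB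
    · obtain ⟨B, hB, rfl⟩ := List.mem_map.1 hA
      exact hL' B hB
  · intro x
    beta_reduce
    rw [hR, hS]
    have e1 : ∀ (y : κ → D) (y' : κ' → D),
        (fun i => Sum.elim x (Sum.elim y y') (Sum.map id Sum.inl i)) = Sum.elim x y := by
      intro y y'; funext i; cases i <;> rfl
    have e2 : ∀ (y : κ → D) (y' : κ' → D),
        (fun i => Sum.elim x (Sum.elim y y') (Sum.map id Sum.inr i)) = Sum.elim x y' := by
      intro y y'; funext i; cases i <;> rfl
    constructor
    · rintro ⟨⟨y, hy⟩, ⟨y', hy'⟩⟩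
      refine ⟨Sum.elim y y', ?_⟩
      rw [List.forall_mem_append, List.forall_mem_map, List.forall_mem_map]
      refine ⟨fun A hA => ?_, fun A hA => ?_⟩
      · rw [Atom.holds_ren, e1]; exact hy A hA
      · rw [Atom.holds_ren, e2]; exact hy' A hA
    · rintro ⟨z, hz⟩
      obtain ⟨y, y', rfl⟩ : ∃ y y', z = Sum.elim y y' :=
        ⟨fun i => z (Sum.inl i), fun i => z (Sum.inr i), by funext i; cases i <;> rfl⟩
      rw [List.forall_mem_append, List.forall_mem_map, List.forall_mem_map] at hz
      refine ⟨⟨y, fun A hA => ?_⟩, ⟨y', fun A hA => ?_⟩⟩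
      · have := hz.1 A hA
        rwa [Atom.holds_ren, e1] at this
      · have := hz.2 A hA
        rwa [Atom.holds_ren, e2] at this

theorem PP.proj {ι μ : Type} [Finite μ] {R : (ι ⊕ μ → D) → Prop} (h : PP Φ R) :
    PP Φ (fun x : ι → D => ∃ y : μ → D, R (Sum.elim x y)) := by
  obtain ⟨κ, hκ, L, hL, hR⟩ := h
  refine ⟨μ ⊕ κ, inferInstance, L.map (Atom.ren (Equiv.sumAssoc ι μ κ)), ?_, ?_⟩
  · intro A hA
    obtain ⟨B, hB, rfl⟩ := List.mem_map.1 hA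
    exact hL B hB
  · intro x
    have e1 : ∀ (y : μ → D) (y' : κ → D),
        (fun i => Sum.elim x (Sum.elim y y') (Equiv.sumAssoc ι μ κ i)) =
          Sum.elim (Sum.elim x y) y' := by
      intro y y'; funext i; rcases i with (i | i) | i <;> rfl
    constructor
    · rintro ⟨y, hy⟩
      obtain ⟨y', hy'⟩ := (hR _).1 hy
      refine ⟨Sum.elim y y', ?_⟩
      rw [List.forall_mem_map]
      intro A hA
      rw [Atom.holds_ren, e1]; exact hy' A hA
    · rintro ⟨z, hz⟩
      obtain ⟨y, y', rfl⟩ : ∃ y y', z = Sum.elim y y' :=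
        ⟨fun i => z (Sum.inl i), fun i => z (Sum.inr i), by funext i; cases i <;> rfl⟩
      rw [List.forall_mem_map] at hz
      refine ⟨y, (hR _).2 ⟨y', fun A hA => ?_⟩⟩
      have := hz A hA
      rwa [Atom.holds_ren, e1] at this

theorem PP.true {ι : Type} : PP Φ (fun _ : ι → D => True) :=
  ⟨Empty, inferInstance, [], by simp, fun x => by simp⟩

theorem PP.eq {ι : Type} (i j : ι) : PP Φ (fun x : ι → D => x i = x j) := by
  refine ⟨Empty, inferInstance, [⟨⟨2, eqC D⟩, ![Sum.inl i, Sum.inl j]⟩], by simp, fun x => ?_⟩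
  simp [Atom.Holds, eqC]

theorem PP.forall_finset {ι J : Type} (s : Finset J) (R : J → (ι → D) → Prop)
    (h : ∀ j ∈ s, PP Φ (R j)) : PP Φ (fun x => ∀ j ∈ s, R j x) := by
  classical
  induction s using Finset.induction_on with
  | empty => exact PP.true.congr (by simp)
  | insert a s ha ih =>
    refine ((h a (by simp)).and (ih fun j hj => h j (by simp [hj]))).congr ?_
    intro x; simp

theorem PP.forall_fin {ι J : Type} [Finite J] (R : J → (ι → D) → Prop)
    (h : ∀ j, PP Φ (R j)) : PP Φ (fun x => ∀ j, R j x) := by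
  have := Fintype.ofFinite J
  exact (PP.forall_finset Finset.univ R fun j _ => h j).congr (by simp)

theorem PP.toV [Fintype D] {n : ℕ} {R : (Fin n → D) → Prop} (h : PP Φ R) :
    ∃ f : (Fin n → D) → ℝ≥0∞, InVClone Φ f ∧ ∀ x, f x ≠ ⊤ ↔ R x := by
  obtain ⟨κ, hκ, L, hL, hR⟩ := h
  obtain ⟨k, ⟨e⟩⟩ := Finite.exists_equiv_fin κ
  refine ⟨_, ⟨k, L.length, fun j => (L.get j).1.1, fun j => (L.get j).1.2,
    fun j i => Sum.elim (Fin.castAdd k) (fun q => Fin.natAdd n (e q)) ((L.get j).2 i),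
    fun j => hL _ (L.get_mem j), fun x => rfl⟩, fun x => ?_⟩
  rw [hR, ne_eq, iInf_eq_top]
  push Not
  have key : ∀ y : Fin k → D,
      (fun v : Fin n ⊕ κ => Fin.append x y
        (Sum.elim (Fin.castAdd k) (fun q => Fin.natAdd n (e q)) v)) =
      Sum.elim x (fun q => y (e q)) := by
    intro y; funext v; cases v <;> simp
  have key2 : ∀ y : Fin k → D,
      (∑ j : Fin L.length, (L.get j).1.2 (fun i => Fin.append x y
        (Sum.elim (Fin.castAdd k) (fun q => Fin.natAdd n (e q)) ((L.get j).2 i))) ≠ ⊤) ↔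
      ∀ A ∈ L, A.Holds (Sum.elim x (fun q => y (e q))) := by
    intro y
    rw [← key y, ENNReal.sum_ne_top, List.forall_mem_iff_get]
    simp only [Finset.mem_univ, true_imp_iff]
    rfl
  constructor
  · rintro ⟨y, hy⟩
    exact ⟨_, (key2 y).1 hy⟩
  · rintro ⟨y, hy⟩
    refine ⟨fun q => y (e.symm q), (key2 _).2 ?_⟩
    simpa using hy

theorem PP.ofV [Fintype D] {n : ℕ} {f : (Fin n → D) → ℝ≥0∞} (h : InVClone Φ f) :
    PP Φ (fun x => f x ≠ ⊤) := by
  obtain ⟨k, m, ar, g, sc, hg, hf⟩ := h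
  refine ⟨Fin k, inferInstance, List.ofFn (fun j : Fin m =>
    (⟨⟨ar j, g j⟩, fun i => finSumFinEquiv.symm (sc j i)⟩ : Atom D (Fin n ⊕ Fin k))), ?_, ?_⟩
  · intro A hA
    obtain ⟨j, rfl⟩ := (List.mem_ofFn' _ _).1 hA
    exact hg j
  · intro x
    beta_reduce
    rw [hf, ne_eq, iInf_eq_top]
    push Not
    refine exists_congr fun y => ?_
    have key : ∀ v : Fin (n + k), Sum.elim x y (finSumFinEquiv.symm v) = Fin.append x y v := by
      intro v
      obtain ⟨w, rfl⟩ := finSumFinEquiv.surjective v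
      rw [Equiv.symm_apply_apply]
      cases w <;> simp
    rw [ENNReal.sum_ne_top, List.forall_mem_ofFn_iff]
    simp only [Finset.mem_univ, true_imp_iff, Atom.Holds, key]

/-- Definable binary relations. -/
def P2 (Φ : Set (CFun D)) (r : D → D → Prop) : Prop := PP Φ (fun x : Fin 2 → D => r (x 0) (x 1))
/-- Definable ternary relations. -/
def P3 (Φ : Set (CFun D)) (r : D → D → D → Prop) : Prop :=
  PP Φ (fun x : Fin 3 → D => r (x 0) (x 1) (x 2))

theorem P2.congr {r s : D → D → Prop} (h : P2 Φ r) (e : ∀ x y, r x y ↔ s x y) : P2 Φ s :=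
  PP.congr h fun _ => e _ _

theorem P3.congr {r s : D → D → D → Prop} (h : P3 Φ r) (e : ∀ x y z, r x y z ↔ s x y z) :
    P3 Φ s :=
  PP.congr h fun _ => e _ _ _

theorem P2.at {ι : Type} {r : D → D → Prop} (h : P2 Φ r) (i j : ι) :
    PP Φ (fun x : ι → D => r (x i) (x j)) := PP.pull h ![i, j]

theorem P3.at {ι : Type} {r : D → D → D → Prop} (h : P3 Φ r) (i j k : ι) :
    PP Φ (fun x : ι → D => r (x i) (x j) (x k)) := PP.pull h ![i, j, k]

theorem P2.swap {r : D → D → Prop} (h : P2 Φ r) : P2 Φ (fun x y => r y x) := h.at 1 0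

theorem ex1 {ι : Type} {R : (ι ⊕ Fin 1 → D) → Prop} (h : PP Φ R) :
    PP Φ (fun x : ι → D => ∃ y : D, R (Sum.elim x fun _ => y)) := by
  refine h.proj.congr fun x => ⟨?_, ?_⟩
  · rintro ⟨y, hy⟩
    refine ⟨y 0, ?_⟩
    have : y = fun _ => y 0 := by funext i; rw [Subsingleton.elim i 0]
    rwa [← this]
  · rintro ⟨y, hy⟩; exact ⟨_, hy⟩

theorem P2.comp {r s : D → D → Prop} (h : P2 Φ r) (h' : P2 Φ s) :
    P2 Φ (fun x y => ∃ z, r x z ∧ s z y) :=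
  ex1 ((h.at (Sum.inl (0 : Fin 2)) (Sum.inr (0 : Fin 1))).and (h'.at (Sum.inr 0) (Sum.inl 1)))

theorem P3.ex {r : D → D → D → Prop} (h : P3 Φ r) : P2 Φ (fun x y => ∃ z, r x y z) :=
  ex1 (h.at (Sum.inl (0 : Fin 2)) (Sum.inl 1) (Sum.inr (0 : Fin 1)))

theorem P3.tr {r : D → D → D → Prop} {s : D → D → Prop} (h : P3 Φ r) (h' : P2 Φ s) :
    P3 Φ (fun x y z => ∃ w, r x y w ∧ s w z) :=
  ex1 ((h.at (Sum.inl (0 : Fin 3)) (Sum.inl 1) (Sum.inr (0 : Fin 1))).and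
    (h'.at (Sum.inr 0) (Sum.inl 2)))

theorem P3.perm132 {r : D → D → D → Prop} (h : P3 Φ r) : P3 Φ (fun x y z => r x z y) :=
  h.at 0 2 1
theorem P3.perm231 {r : D → D → D → Prop} (h : P3 Φ r) : P3 Φ (fun x y z => r z x y) :=
  h.at 2 0 1

/-- All unary relations are definable. -/
def Cons (Φ : Set (CFun D)) : Prop := ∀ S : Finset D, PP Φ (fun x : Fin 1 → D => x 0 ∈ S)

theorem Cons.at {ι : Type} (h : Cons Φ) (S : Finset D) (i : ι) :
    PP Φ (fun x : ι → D => x i ∈ S) := (h S).pull (fun _ => i)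

theorem P3.fix (hc : Cons Φ) {r : D → D → D → Prop} (h : P3 Φ r) (c : D) :
    P2 Φ (fun x y => r x y c) := by
  refine P2.congr (P3.ex (r := fun x y z => r x y z ∧ z ∈ ({c} : Finset D))
    (h.and (hc.at {c} 2))) ?_
  intro x y; simp

/-- The relation `N(a,b,c,d)` is definable. -/
def Edge (Φ : Set (CFun D)) (a b c d : D) : Prop :=
  P2 Φ (fun x y => (x = a ∧ y = c) ∨ (x = b ∧ y = c) ∨ (x = a ∧ y = d))

/-- The relation `{(a,d),(b,c)}` is definable. -/
def Bij (Φ : Set (CFun D)) (a b c d : D) : Prop :=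
  P2 Φ (fun x y => (x = a ∧ y = d) ∨ (x = b ∧ y = c))

theorem Edge.symm {a b c d : D} (h : Edge Φ a b c d) : Edge Φ c d a b :=
  h.swap.congr (by grind)
theorem Bij.symm {a b c d : D} (h : Bij Φ a b c d) : Bij Φ c d a b :=
  h.swap.congr (by grind)
theorem Bij.flip {a b c d : D} (h : Bij Φ a b c d) : Bij Φ b a d c :=
  P2.congr h (by grind)

theorem loop1 {a b c d e f : D} (hab : a ≠ b) (hcd : c ≠ d) (hef : e ≠ f) (h1 : Edge Φ a b c d)
    (h2 : Edge Φ a b e f) (h3 : Bij Φ c d e f) : Edge Φ a b a b := by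
  refine (P2.comp (P2.comp h1 h3) h2.swap).congr ?_
  intro x y
  constructor
  · rintro ⟨z, ⟨w, _, _⟩, _⟩
    grind
  · rintro (⟨rfl, rfl⟩ | ⟨rfl, rfl⟩ | ⟨rfl, rfl⟩)
    · exact ⟨f, ⟨c, by simp⟩, by simp⟩
    · exact ⟨f, ⟨c, by simp⟩, by simp⟩
    · exact ⟨e, ⟨d, by simp⟩, by simp⟩

theorem loop2 {a b c d e f : D} (hab : a ≠ b) (hcd : c ≠ d) (hef : e ≠ f) (h1 : Edge Φ a b c d)
    (h2 : Bij Φ a b e f) (h3 : Bij Φ c d e f) : Edge Φ a b a b := by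
  refine (P2.comp (P2.comp h1 h3) h2.symm).congr ?_
  intro x y
  constructor
  · rintro ⟨z, ⟨w, _, _⟩, _⟩
    grind
  · rintro (⟨rfl, rfl⟩ | ⟨rfl, rfl⟩ | ⟨rfl, rfl⟩)
    · exact ⟨f, ⟨c, by simp⟩, by simp⟩
    · exact ⟨f, ⟨c, by simp⟩, by simp⟩
    · exact ⟨e, ⟨d, by simp⟩, by simp⟩

/-- The obstructions (i), (ii) and the triangle case of (iii). -/
def Obs (Φ : Set (CFun D)) : Prop :=
  (∃ a b, a ≠ b ∧ Edge Φ a b a b) ∨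
  (∃ a b, a ≠ b ∧ P3 Φ (fun x y z => (x = a ∧ y = a ∧ z = a) ∨ (x = a ∧ y = b ∧ z = b) ∨
    (x = b ∧ y = a ∧ z = b) ∨ (x = b ∧ y = b ∧ z = a))) ∨
  (∃ a b c d e f, a ≠ b ∧ c ≠ d ∧ e ≠ f ∧ Edge Φ a b c d ∧ Edge Φ c d e f ∧ Edge Φ e f a b)

theorem edge_or_bij {r : D → D → Prop} (h : P2 Φ r) {a b c d : D}
    (hs : ∀ x y, r x y → (x = a ∨ x = b) ∧ (y = c ∨ y = d))
    (h1 : r a d) (h2 : r b c) (h3 : ¬ r b d) :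
    (r a c ∧ Edge Φ a b c d) ∨ (¬ r a c ∧ Bij Φ a b c d) := by
  by_cases h4 : r a c
  · refine Or.inl ⟨h4, h.congr fun x y => ⟨fun hr => ?_, ?_⟩⟩
    · rcases hs x y hr with ⟨rfl | rfl, rfl | rfl⟩ <;> simp_all
    · rintro (⟨rfl, rfl⟩ | ⟨rfl, rfl⟩ | ⟨rfl, rfl⟩) <;> assumption
  · refine Or.inr ⟨h4, h.congr fun x y => ⟨fun hr => ?_, ?_⟩⟩
    · rcases hs x y hr with ⟨rfl | rfl, rfl | rfl⟩ <;> simp_all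
    · rintro (⟨rfl, rfl⟩ | ⟨rfl, rfl⟩) <;> assumption

theorem core (hc : Cons Φ) {T : D → D → D → Prop} (hT : P3 Φ T) {a b c d e f : D}
    (hs : ∀ x y z, T x y z → (x = a ∨ x = b) ∧ (y = c ∨ y = d) ∧ (z = e ∨ z = f))
    (hab : a ≠ b) (hcd : c ≠ d) (hef : e ≠ f)
    (h1 : T a d f) (h2 : T b c f) (h3 : T b d e) (h0 : ¬ T b d f) : Obs Φ := by
  have A := edge_or_bij (hT.fix hc f) (a := a) (b := b) (c := c) (d := d)
    (fun x y h => ⟨(hs _ _ _ h).1, (hs _ _ _ h).2.1⟩) h1 h2 h0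
  have B := edge_or_bij (hT.perm132.fix hc d) (a := a) (b := b) (c := e) (d := f)
    (fun x y h => ⟨(hs _ _ _ h).1, (hs _ _ _ h).2.2⟩) h1 h3 h0
  have C := edge_or_bij (hT.perm231.fix hc b) (a := c) (b := d) (c := e) (d := f)
    (fun x y h => ⟨(hs _ _ _ h).2.1, (hs _ _ _ h).2.2⟩) h2 h3 h0
  rcases A with ⟨A0, A⟩ | ⟨A0, A⟩ <;> rcases B with ⟨B0, B⟩ | ⟨B0, B⟩ <;>
    rcases C with ⟨C0, C⟩ | ⟨C0, C⟩
  · exact Or.inr (Or.inr ⟨a, b, c, d, e, f, hab, hcd, hef, A, C, B.symm⟩)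
  · exact Or.inl ⟨_, _, hab, loop1 hab hcd hef A B C⟩
  · exact Or.inl ⟨_, _, hcd, loop1 hcd hab hef A.symm C B⟩
  · exact Or.inl ⟨_, _, hab, loop2 hab hcd hef A B C⟩
  · exact Or.inl ⟨_, _, hef, loop1 hef hab hcd B.symm C.symm A⟩
  · exact Or.inl ⟨_, _, hab, loop2 hab hef hcd B A C.symm⟩
  · exact Or.inl ⟨_, _, hcd, loop2 hcd hef hab C A.symm B.symm⟩
  · by_cases h7 : T a c e
    · refine Or.inr (Or.inl ⟨a, b, hab, ?_⟩)
      have I3 : P2 Φ (fun x y => (x = e ∧ y = a) ∨ (x = f ∧ y = b)) := by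
        refine (P2.comp C.symm A.symm).congr fun x y => ⟨?_, ?_⟩
        · rintro ⟨z, _, _⟩; grind
        · rintro (⟨rfl, rfl⟩ | ⟨rfl, rfl⟩)
          · exact ⟨d, by simp⟩
          · exact ⟨c, by simp⟩
      have I2 : P2 Φ (fun x y => (x = c ∧ y = a) ∨ (x = d ∧ y = b)) := by
        refine (P2.comp C B.symm).congr fun x y => ⟨?_, ?_⟩
        · rintro ⟨z, _, _⟩; grind
        · rintro (⟨rfl, rfl⟩ | ⟨rfl, rfl⟩)
          · exact ⟨f, by simp⟩
          · exact ⟨e, by simp⟩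
      refine ((hT.tr I3).perm132.tr I2).perm132.congr fun x y z => ⟨?_, ?_⟩
      · rintro ⟨y', ⟨z', ht, hz⟩, hy⟩
        obtain ⟨hx, _, _⟩ := hs _ _ _ ht
        rcases hx with rfl | rfl <;> rcases hy with ⟨rfl, rfl⟩ | ⟨rfl, rfl⟩ <;>
          rcases hz with ⟨rfl, rfl⟩ | ⟨rfl, rfl⟩ <;> simp_all
      · rintro (⟨rfl, rfl, rfl⟩ | ⟨rfl, rfl, rfl⟩ | ⟨rfl, rfl, rfl⟩ | ⟨rfl, rfl, rfl⟩)
        · exact ⟨c, ⟨e, h7, by simp⟩, by simp⟩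
        · exact ⟨d, ⟨f, h1, by simp⟩, by simp⟩
        · exact ⟨c, ⟨f, h2, by simp⟩, by simp⟩
        · exact ⟨d, ⟨e, h3, by simp⟩, by simp⟩
    · have E : Edge Φ b a d c := by
        refine hT.ex.congr fun x y => ⟨?_, ?_⟩
        · rintro ⟨z, ht⟩
          rcases hs _ _ _ ht with ⟨rfl | rfl, rfl | rfl, rfl | rfl⟩ <;> simp_all
        · rintro (⟨rfl, rfl⟩ | ⟨rfl, rfl⟩ | ⟨rfl, rfl⟩)
          · exact ⟨_, h3⟩
          · exact ⟨_, h1⟩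
          · exact ⟨_, h2⟩
      exact Or.inl ⟨_, _, hab.symm, loop2 hab.symm hcd.symm hef.symm E B.flip C.flip⟩

theorem decomp (hc : Cons Φ) (hO : ¬ Obs Φ) {ι : Type} [Finite ι] {R : (ι → D) → Prop}
    (hR : PP Φ R) (hne : ∃ r, R r) (t : ι → D) (P : Finset ι)
    (h2 : ∀ i ∈ P, ∀ j ∈ P, ∃ r, R r ∧ r i = t i ∧ r j = t j) :
    ∃ r, R r ∧ ∀ i ∈ P, r i = t i := by
  classical
  induction P using Finset.strongInduction with
  | H P ih =>
    by_cases hcard : P.card ≤ 2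
    · rcases Finset.eq_empty_or_nonempty P with rfl | ⟨i, hi⟩
      · obtain ⟨r, hr⟩ := hne
        exact ⟨r, hr, by simp⟩
      · by_cases hj : ∃ j ∈ P, j ≠ i
        · obtain ⟨j, hj, hji⟩ := hj
          obtain ⟨r, hr, hri, hrj⟩ := h2 i hi j hj
          have : ({i, j} : Finset ι) = P := Finset.eq_of_subset_of_card_le
            (by intro q; simp only [Finset.mem_insert, Finset.mem_singleton]; rintro (rfl | rfl) <;> assumption)
            (by rw [Finset.card_pair hji.symm]; exact hcard)
          refine ⟨r, hr, ?_⟩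
          rw [← this]; simp [hri, hrj]
        · push Not at hj
          obtain ⟨r, hr, hri, _⟩ := h2 i hi i hi
          exact ⟨r, hr, fun j hjP => by rw [hj j hjP]; exact hri⟩
    · obtain ⟨i, j, k, hi, hj, hk, hij, hik, hjk⟩ := Finset.two_lt_card_iff.1 (not_le.1 hcard)
      have step : ∀ q ∈ P, ∃ r, R r ∧ ∀ p ∈ P, p ≠ q → r p = t p := by
        intro q hq
        obtain ⟨r, hr, hrp⟩ := ih (P.erase q) (Finset.erase_ssubset hq)
          (fun i hi j hj => h2 i (Finset.mem_of_mem_erase hi) j (Finset.mem_of_mem_erase hj))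
        exact ⟨r, hr, fun p hp hpq => hrp p (Finset.mem_erase.2 ⟨hpq, hp⟩)⟩
      by_contra hcon
      have step' : ∀ q ∈ P, ∃ r, R r ∧ (∀ p ∈ P, p ≠ q → r p = t p) ∧ r q ≠ t q := by
        intro q hq
        obtain ⟨r, hr, hrp⟩ := step q hq
        refine ⟨r, hr, hrp, fun hqq => hcon ⟨r, hr, fun p hp => ?_⟩⟩
        by_cases h : p = q
        · rw [h]; exact hqq
        · exact hrp p hp h
      obtain ⟨r1, hr1, ht1, hn1⟩ := step' i hi
      obtain ⟨r2, hr2, ht2, hn2⟩ := step' j hj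
      obtain ⟨r3, hr3, ht3, hn3⟩ := step' k hk
      have hT : P3 Φ (fun x y z => ∃ r, R r ∧ (x = r i ∧ y = r j ∧ z = r k) ∧
          (∀ p ∈ P \ {i, j, k}, r p ∈ ({t p} : Finset D)) ∧
          (x ∈ ({r1 i, t i} : Finset D) ∧ y ∈ ({r2 j, t j} : Finset D) ∧
            z ∈ ({r3 k, t k} : Finset D))) := by
        refine PP.proj (ι := Fin 3) (μ := ι) (R := fun v => R (fun q => v (Sum.inr q)) ∧
          (v (Sum.inl 0) = v (Sum.inr i) ∧ v (Sum.inl 1) = v (Sum.inr j) ∧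
            v (Sum.inl 2) = v (Sum.inr k)) ∧
          (∀ p ∈ P \ {i, j, k}, v (Sum.inr p) ∈ ({t p} : Finset D)) ∧
          (v (Sum.inl 0) ∈ ({r1 i, t i} : Finset D) ∧
           v (Sum.inl 1) ∈ ({r2 j, t j} : Finset D) ∧
            v (Sum.inl 2) ∈ ({r3 k, t k} : Finset D))) ?_
        exact (hR.pull _).and (((PP.eq _ _).and ((PP.eq _ _).and (PP.eq _ _))).and
          ((PP.forall_finset _ _ fun p _ => hc.at _ _).and
            ((hc.at _ _).and ((hc.at _ _).and (hc.at _ _)))))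
      refine hO (core hc hT (a := r1 i) (b := t i) (c := r2 j) (d := t j) (e := r3 k) (f := t k)
        ?_ hn1 hn2 hn3 ?_ ?_ ?_ ?_)
      · rintro x y z ⟨r, _, _, _, hx⟩
        simpa using hx
      · refine ⟨r1, hr1, ⟨rfl, (ht1 j hj hij.symm).symm, (ht1 k hk hik.symm).symm⟩, ?_, by simp⟩
        intro p hp
        simp only [Finset.mem_sdiff, Finset.mem_insert, Finset.mem_singleton, not_or] at hp ⊢
        exact ht1 p hp.1 hp.2.1
      · refine ⟨r2, hr2, ⟨(ht2 i hi hij).symm, rfl, (ht2 k hk hjk.symm).symm⟩, ?_, by simp⟩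
        intro p hp
        simp only [Finset.mem_sdiff, Finset.mem_insert, Finset.mem_singleton, not_or] at hp ⊢
        exact ht2 p hp.1 hp.2.2.1
      · refine ⟨r3, hr3, ⟨(ht3 i hi hik).symm, (ht3 j hj hjk).symm, rfl⟩, ?_, by simp⟩
        intro p hp
        simp only [Finset.mem_sdiff, Finset.mem_insert, Finset.mem_singleton, not_or] at hp ⊢
        exact ht3 p hp.1 hp.2.2.2
      · rintro ⟨r, hr, ⟨e1, e2, e3⟩, hp, _⟩
        refine hcon ⟨r, hr, fun p hpP => ?_⟩
        by_cases h1 : p = i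
        · rw [h1, e1]
        by_cases h2 : p = j
        · rw [h2, e2]
        by_cases h3 : p = k
        · rw [h3, e3]
        simpa using hp p (by simp [hpP, h1, h2, h3])

theorem exists_maj [Finite D] (hc : Cons Φ) (hO : ¬ Obs Φ) :
    ∃ ρ : D → D → D → D, (∀ a b : D, ρ a a b = a ∧ ρ a b a = a ∧ ρ b a a = a) ∧
      ∀ (n : ℕ) (R : (Fin n → D) → Prop), PP Φ R → ∀ x y z, R x → R y → R z →
        R (fun i => ρ (x i) (y i) (z i)) := by
  classical
  let ι := D × D × D
  let p1 : ι → D := fun q => q.1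
  let p2 : ι → D := fun q => q.2.1
  let p3 : ι → D := fun q => q.2.2
  let J := {S : (ι → D) → Prop // PP Φ S ∧ S p1 ∧ S p2 ∧ S p3}
  have hR : PP Φ (fun x => ∀ S : J, S.1 x) := PP.forall_fin _ fun S => S.2.1
  let t : ι → D := fun q => if q.1 = q.2.1 then q.1 else q.2.2
  have := Fintype.ofFinite ι
  let P : Finset ι := Finset.univ.filter fun q => q.1 = q.2.1 ∨ q.1 = q.2.2 ∨ q.2.1 = q.2.2
  have R1 : ∀ S : J, S.1 p1 := fun S => S.2.2.1
  have R2 : ∀ S : J, S.1 p2 := fun S => S.2.2.2.1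
  have R3 : ∀ S : J, S.1 p3 := fun S => S.2.2.2.2
  obtain ⟨r, hr, hrt⟩ := decomp hc hO hR ⟨p1, R1⟩ t P (by
    rintro ⟨a, b, c⟩ hi ⟨a', b', c'⟩ hj
    simp only [P, Finset.mem_filter, Finset.mem_univ, true_and] at hi hj
    have : (a = t (a, b, c) ∧ a' = t (a', b', c')) ∨ (b = t (a, b, c) ∧ b' = t (a', b', c')) ∨
        (c = t (a, b, c) ∧ c' = t (a', b', c')) := by
      simp only [t]
      grind
    rcases this with h | h | h
    · exact ⟨p1, R1, h⟩
    · exact ⟨p2, R2, h⟩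
    · exact ⟨p3, R3, h⟩)
  refine ⟨fun a b c => r (a, b, c), fun a b => ⟨?_, ?_, ?_⟩, ?_⟩
  · exact (hrt (a, a, b) (by simp [P])).trans (by simp +contextual [t])
  · exact (hrt (a, b, a) (by simp [P])).trans (by simp +contextual [t])
  · exact (hrt (b, a, a) (by simp [P])).trans (by simp +contextual [t])
  · intro n R hR x y z hx hy hz
    exact hr ⟨fun v => R (fun i => v (x i, y i, z i)), hR.pull _, hx, hy, hz⟩

end

end Takh

/-- Takhanov. Let `Γ = Rel(⟨Φ⟩_v)` be a conservative
relational clone. Then (i) some `N(a,b,a,b) ∈ Γ` with `a ≠ b`, or (ii) some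
relation `{(a,a,a),(a,b,b),(b,a,b),(b,b,a)} ∈ Γ` with `a ≠ b`, or (iii) there is
an odd cycle `N(aᵢ,bᵢ,a_{i+1},b_{i+1}) ∈ Γ` (indices mod `2k+1`) with `aᵢ ≠ bᵢ`,
or (iv) `Γ` has a majority polymorphism. -/
theorem takhanov_classification
    {D : Type} [Fintype D] [DecidableEq D] (hD : 2 ≤ Fintype.card D)
    (Φ : Set (CFun D)) (Γ : Set (CFun D))
    (hΓ : ∀ (k : ℕ) (g : (Fin k → D) → ℝ≥0∞),
      (⟨k, g⟩ : CFun D) ∈ Γ ↔ ∃ f : (Fin k → D) → ℝ≥0∞, InVClone Φ f ∧ g = RelC f)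
    (hcons : ∀ S : Finset D,
      (⟨1, fun x => if x 0 ∈ S then (0 : ℝ≥0∞) else ⊤⟩ : CFun D) ∈ Γ) :
    (∃ a b : D, a ≠ b ∧ (⟨2, Ncrisp a b a b⟩ : CFun D) ∈ Γ) ∨
    (∃ a b : D, a ≠ b ∧
      (⟨3, fun x : Fin 3 → D =>
        if x = ![a, a, a] ∨ x = ![a, b, b] ∨ x = ![b, a, b] ∨ x = ![b, b, a]
        then (0 : ℝ≥0∞) else ⊤⟩ : CFun D) ∈ Γ) ∨
    (∃ k : ℕ, 1 ≤ k ∧ ∃ a b : Fin (2 * k + 1) → D,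
      (∀ i, a i ≠ b i) ∧
      ∀ i : Fin (2 * k + 1),
        (⟨2, Ncrisp (a i) (b i) (a (i + 1)) (b (i + 1))⟩ : CFun D) ∈ Γ) ∨
    (∃ ρ : D → D → D → D,
      (∀ a b : D, ρ a a b = a ∧ ρ a b a = a ∧ ρ b a a = a) ∧
      ∀ g ∈ Γ, ∀ x y z : Fin g.1 → D,
        g.2 x ≠ ⊤ → g.2 y ≠ ⊤ → g.2 z ≠ ⊤ →
          g.2 (fun i => ρ (x i) (y i) (z i)) ≠ ⊤) := by
  have toΓ : ∀ (k : ℕ) (R : (Fin k → D) → Prop) (g : (Fin k → D) → ℝ≥0∞), Takh.PP Φ R →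
      (∀ x, R x → g x = 0) → (∀ x, ¬ R x → g x = ⊤) → (⟨k, g⟩ : CFun D) ∈ Γ := by
    intro k R g h h0 h1
    obtain ⟨f, hf, hfR⟩ := h.toV
    refine (hΓ k g).2 ⟨f, hf, ?_⟩
    funext x
    by_cases hx : R x
    · rw [h0 x hx, RelC, if_neg ((hfR x).2 hx)]
    · rw [h1 x hx, RelC, if_pos (by by_contra h; exact hx ((hfR x).1 h))]
  have ofΓ : ∀ (k : ℕ) (g : (Fin k → D) → ℝ≥0∞), (⟨k, g⟩ : CFun D) ∈ Γ →
      Takh.PP Φ (fun x => g x ≠ ⊤) := by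
    intro k g h
    obtain ⟨f, hf, rfl⟩ := (hΓ k g).1 h
    refine (Takh.PP.ofV hf).congr fun x => ?_
    simp [RelC]
  have hc : Takh.Cons Φ := fun S => (ofΓ _ _ (hcons S)).congr fun x => by simp
  have hE : ∀ a b c d : D, Takh.Edge Φ a b c d → (⟨2, Ncrisp a b c d⟩ : CFun D) ∈ Γ := by
    intro a b c d h
    exact toΓ 2 _ _ h (fun x hx => if_pos hx) (fun x hx => if_neg hx)
  by_cases hO : Takh.Obs Φ
  · rcases hO with ⟨a, b, hab, h⟩ | ⟨a, b, hab, h⟩ |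
      ⟨a, b, c, d, e, f, hab, hcd, hef, h1, h2, h3⟩
    · exact Or.inl ⟨a, b, hab, hE _ _ _ _ h⟩
    · refine Or.inr (Or.inl ⟨a, b, hab, ?_⟩)
      have key : ∀ (x : Fin 3 → D) (p q r : D), x = ![p, q, r] ↔ x 0 = p ∧ x 1 = q ∧ x 2 = r := by
        intro x p q r
        constructor
        · rintro rfl; simp
        · rintro ⟨rfl, rfl, rfl⟩; funext i; fin_cases i <;> rfl
      refine toΓ 3 _ _ h (fun x hx => if_pos ?_) (fun x hx => if_neg ?_)
      · simpa only [key] using hx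
      · simpa only [key] using hx
    · refine Or.inr (Or.inr (Or.inl ⟨1, le_rfl, ![a, c, e], ![b, d, f], ?_, ?_⟩))
      · intro i; fin_cases i <;> assumption
      · intro i
        fin_cases i
        · exact hE _ _ _ _ h1
        · exact hE _ _ _ _ h2
        · exact hE _ _ _ _ h3
  · obtain ⟨ρ, h1, h2⟩ := Takh.exists_maj hc hO
    refine Or.inr (Or.inr (Or.inr ⟨ρ, h1, ?_⟩))
    rintro ⟨n, g⟩ hg x y z hx hy hz
    exact h2 n _ (ofΓ n g hg) x y z hx hy hz
end
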